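/- There exists an absolute constant γ₀ > 0 such that for every constant ε ∈ (0,1) and every ρ > 0 there exists m₀ such that for all m ≥ m₀ and all integers d with (1-γ₀)·m < d < m the following holds. Set r = m - d - 1 and K = ⌊(1-ε)·binom(m,≤r)⌋, and let Z be a uniformly random K-element subset of F₂^m. Then with probability at least 1 - ρ, there is no nonzero multilinear polynomial P in m variables over F₂ of total degree at most d whose support {x ∈ F₂^m : P(x) ≠ 0} is contained in Z. (Equivalently, the Reed–Muller code RM(m,d) recovers from the K random erasures indexed by Z.) -/

import Mathlib

/-- `binomLe m r = ∑_{i=0}^r C(m,i)`, written `binom(m, ≤ r)`. -/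
def binomLe (m r : ℕ) : ℕ := ∑ i ∈ Finset.range (r + 1), Nat.choose m i

/-- Index type for multilinear monomials of degree at most `r` in `m` variables:
subsets `S ⊆ {1,…,m}` with `|S| ≤ r`. -/
abbrev MonIdx (m r : ℕ) := {S : Finset (Fin m) // S.card ≤ r}

/-- `RM(m,r)` as the space of coefficient vectors of multilinear polynomials in `m`
variables of total degree at most `r` over `F₂`. -/
abbrev RMcode (m r : ℕ) := MonIdx m r → ZMod 2

/-- Evaluation of a polynomial (given by its coefficients) at the point `z`,
as a linear map: `c ↦ ∑_{|S| ≤ r} c_S ∏_{i ∈ S} z_i`. -/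
def evalLin (m r : ℕ) (z : Fin m → ZMod 2) : RMcode m r →ₗ[ZMod 2] ZMod 2 :=
  ∑ S : MonIdx m r, (∏ i ∈ S.1, z i) • LinearMap.proj S

/-- The degree-`r` vanishing space `I_r(Z)` of the set `Z ⊆ F₂^m`. -/
def vanishing (m r : ℕ) (Z : Set (Fin m → ZMod 2)) : Submodule (ZMod 2) (RMcode m r) :=
  ⨅ z ∈ Z, LinearMap.ker (evalLin m r z)

/-- The vector `z^{(r)}` of evaluations at `z` of all multilinear monomials of degree `≤ r`. -/
def monVec (m r : ℕ) (z : Fin m → ZMod 2) : MonIdx m r → ZMod 2 := fun S => ∏ i ∈ S.1, z i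

/-- Fractional Hamming weight of the polynomial with coefficients `c`. -/
noncomputable def wt (m r : ℕ) (c : RMcode m r) : ℝ :=
  ((Finset.univ.filter (fun z : Fin m → ZMod 2 => evalLin m r z c ≠ 0)).card : ℝ) / 2 ^ m

/-- The number of zeros in `F₂^m` of the polynomial with coefficients `c`,
i.e. `(1 - wt(P)) · 2^m`. -/
def numZeros (m r : ℕ) (c : RMcode m r) : ℕ :=
  (Finset.univ.filter (fun z : Fin m → ZMod 2 => evalLin m r z c = 0)).card

/-- The degree-`r` closure of `Z ⊆ F₂^m`. -/
def closureSet (m r : ℕ) (Z : Set (Fin m → ZMod 2)) : Set (Fin m → ZMod 2) :=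
  {u | ∀ c ∈ vanishing m r Z, evalLin m r u c = 0}

/-! Let `r = m - d - 1`, so that `RM(m,d)` is the dual of `RM(m,r)`. By Fourier inversion, the
number of words of `RM(m,d)` supported in a `K`-subset `Z` is `2^K` times the fraction of the
words `P ∈ RM(m,r)` that vanish on `Z`. Averaging over `Z`, the expected number of such words is
at most the mean of `(1 + bias P)^K`, where `bias P = 𝔼 (-1)^P(x)`. Since the zero word is always
counted, it suffices to bound this mean by `1 + ρ`.

Words of tiny bias are harmless, so one needs to know how many words have bias at least `2^{-l}`,
or relative weight at most `2^{-j}`. If `b` is a random `k`-tuple of directions and `P` is biased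
towards `0`, then for most points `x` the values of `P` at the translates of `x` by the span of
`b` have a majority of zeros. Two words with the same derivatives along `b` differ by a function
that is constant on these flats, so they differ only where one of the two majorities fails. Hence
`P` is determined by `b`, by its derivatives along `b`, and by a word of small weight. For words
of small weight the derivatives are again of small weight and of lower degree, which gives a
recursion on the degree. For words that are merely biased, adding to `P` any word that is
invariant along `b` does not change the derivatives, so these take at most
`2^(binom(m,≤r) - binom(m-k,≤r))` values. -/

namespace ReedMuller

open Finset Function Filter
open scoped BigOperators fwdDiff

lemma eq_one_of_ne_zero {a : ZMod 2} (ha : a ≠ 0) : a = 1 := Fin.eq_one_of_ne_zero a ha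

section Bias

variable {X : Type*} [Fintype X]

/-- The nontrivial real character `a ↦ (-1)^a` of `F₂`. -/
noncomputable def sign : AddChar (ZMod 2) ℝ := AddChar.zmodChar 2 (ζ := -1) (by norm_num)

lemma sign_apply (a : ZMod 2) : sign a = if a = 0 then 1 else -1 := by
  by_cases ha : a = 0
  · simp [ha]
  · simp [eq_one_of_ne_zero ha, sign, AddChar.zmodChar_apply, ZMod.val_one]

lemma sign_sq (a : ZMod 2) : sign a ^ 2 = 1 := by
  rw [sign_apply]; split_ifs <;> norm_num

/-- The bias `𝔼 (-1)^P(x)` of an `F₂`-valued function, i.e. the difference between the fractions of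
its zeros and of its ones. -/
noncomputable def bias (P : X → ZMod 2) : ℝ := 𝔼 x, sign (P x)

lemma bias_eq_one_sub [Nonempty X] (P : X → ZMod 2) :
    bias P = 1 - 2 * hammingNorm P / Fintype.card X := by
  have hsign (x : X) : sign (P x) = 1 - 2 * if P x ≠ 0 then 1 else 0 := by
    rw [sign_apply]; split_ifs <;> simp_all; norm_num
  simp_rw [bias, hsign, expect_sub_distrib, ← mul_expect, Fintype.expect_eq_sum_div_card, sum_boole]
  simp [hammingNorm, mul_div_assoc]

lemma bias_zero [Nonempty X] : bias (0 : X → ZMod 2) = 1 := by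
  simp [bias_eq_one_sub]

lemma one_add_bias [Nonempty X] (P : X → ZMod 2) :
    1 + bias P = 2 * #{x | P x = 0} / Fintype.card X := by
  have hcard : (#{x | P x = 0} + hammingNorm P : ℝ) = Fintype.card X := by
    exact_mod_cast card_filter_add_card_filter_not (s := univ) (P · = 0)
  have hX : (Fintype.card X : ℝ) ≠ 0 := by simp
  rw [bias_eq_one_sub]
  field_simp
  linarith

end Bias

section RandomCombinations

variable {V : Type*} [Fintype V] [AddCommGroup V] [Module (ZMod 2) V] {k : ℕ}

/-- Conditionally on the other directions, `∑ c i • b i` is uniform as soon as some `c i` is `1`. -/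
lemma expect_linearCombination_of_eq_one {c : Fin k → ZMod 2} {i : Fin k} (hc : c i = 1)
    {G : (Fin k → V) → V → ℝ} (hG : ∀ b v, G (b + Pi.single i v) = G b) :
    𝔼 b, G b (Fintype.linearCombination (ZMod 2) b c) = 𝔼 b, 𝔼 v, G b v := by
  have hcomb (b : Fin k → V) (v : V) :
      Fintype.linearCombination (ZMod 2) (b + Pi.single i v) c =
        Fintype.linearCombination (ZMod 2) b c + v := by
    simp [Fintype.linearCombination_apply, smul_add, sum_add_distrib, Pi.single_apply, hc]
  calc 𝔼 b, G b (Fintype.linearCombination (ZMod 2) b c)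
      = 𝔼 v : V, 𝔼 b, G b (Fintype.linearCombination (ZMod 2) b c + v) := by
        rw [← Fintype.expect_const (𝔼 b, G b (Fintype.linearCombination (ZMod 2) b c)) (ι := V)]
        refine expect_congr rfl fun v _ =>
          (Fintype.expect_equiv (Equiv.addRight (Pi.single i v)) _ _ fun b => ?_).symm
        rw [Equiv.coe_addRight, hcomb, hG]
    _ = 𝔼 b, 𝔼 v, G b (Fintype.linearCombination (ZMod 2) b c + v) := expect_comm ..
    _ = 𝔼 b, 𝔼 v, G b v :=
        expect_congr rfl fun b _ => Fintype.expect_equiv (Equiv.addLeft _) _ _ fun _ => rfl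

lemma expect_linearCombination {c : Fin k → ZMod 2} (hc : c ≠ 0) (F : V → ℝ) :
    𝔼 b, F (Fintype.linearCombination (ZMod 2) b c) = 𝔼 v, F v := by
  obtain ⟨i, hi⟩ := Function.ne_iff.mp hc
  rw [expect_linearCombination_of_eq_one (eq_one_of_ne_zero hi) (G := fun _ => F)
    fun _ _ => rfl, Fintype.expect_const]

lemma expect_mul_linearCombination_eq_zero {f : V → ℝ} (hf : 𝔼 v, f v = 0)
    {c c' : Fin k → ZMod 2} (hcc : c ≠ c') :
    𝔼 b, f (Fintype.linearCombination (ZMod 2) b c) *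
      f (Fintype.linearCombination (ZMod 2) b c') = 0 := by
  obtain ⟨i, hi⟩ := Function.ne_iff.mp hcc
  wlog hc : c i = 0 generalizing c c'
  · simp_rw [mul_comm (f (Fintype.linearCombination _ _ c))]
    have hc1 : c i = 1 := eq_one_of_ne_zero hc
    refine this hcc.symm hi.symm ?_
    by_contra h
    exact hi (hc1.trans (eq_one_of_ne_zero h).symm)
  have hc' : c' i = 1 := eq_one_of_ne_zero fun h => hi (hc.trans h.symm)
  rw [expect_linearCombination_of_eq_one hc'
    (G := fun b v => f (Fintype.linearCombination (ZMod 2) b c) * f v)]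
  · simp [← mul_expect, hf]
  · intro b v
    simp [Fintype.linearCombination_apply, smul_add, sum_add_distrib, Pi.single_apply, hc]

lemma card_filter_ne_zero (k : ℕ) : (#{c : Fin k → ZMod 2 | c ≠ 0} : ℝ) = 2 ^ k - 1 := by
  rw [filter_ne', cast_card_erase_of_mem (mem_univ _)]
  simp

lemma expect_sq_sum_linearCombination {f : V → ℝ} (hf : 𝔼 v, f v = 0) (k : ℕ) :
    𝔼 b : Fin k → V, (∑ c with c ≠ 0, f (Fintype.linearCombination (ZMod 2) b c)) ^ 2 =
      (2 ^ k - 1) * 𝔼 v, f v ^ 2 := by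
  simp_rw [sq (∑ _ ∈ _, _), sum_mul_sum, expect_sum_comm]
  have hdiag (c : Fin k → ZMod 2) (hc : c ∈ univ.filter (· ≠ 0)) :
      ∑ c' with c' ≠ 0, 𝔼 b, f (Fintype.linearCombination (ZMod 2) b c) *
        f (Fintype.linearCombination (ZMod 2) b c') = 𝔼 v, f v ^ 2 := by
    rw [sum_eq_single_of_mem c hc fun c' _ hcc =>
      expect_mul_linearCombination_eq_zero hf hcc.symm]
    simp_rw [← sq]
    exact expect_linearCombination (mem_filter.mp hc).2 fun v => f v ^ 2
  rw [sum_congr rfl hdiag, sum_const, nsmul_eq_mul, card_filter_ne_zero]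

end RandomCombinations

section Vote

variable {V : Type*} [AddCommGroup V] [Module (ZMod 2) V] {k : ℕ}

/-- The sum of the signs of `P` over the translates of `x` by the nonzero combinations of the
directions `b`: its sign is a majority vote on the values of `P` there. -/
noncomputable def vote (b : Fin k → V) (P : V → ZMod 2) (x : V) : ℝ :=
  ∑ c with c ≠ 0, sign (P (x + Fintype.linearCombination (ZMod 2) b c))

lemma expect_sq_vote_sub [Fintype V] (P : V → ZMod 2) (k : ℕ) (x : V) :
    𝔼 b : Fin k → V, (vote b P x - (2 ^ k - 1) * bias P) ^ 2 =
      (2 ^ k - 1) * (1 - bias P ^ 2) := by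
  have hmean : 𝔼 v, sign (P (x + v)) = bias P :=
    Fintype.expect_equiv (Equiv.addLeft x) _ _ fun _ => rfl
  have hvar : 𝔼 v, (sign (P (x + v)) - bias P) ^ 2 = 1 - bias P ^ 2 := by
    simp_rw [sub_sq, sign_sq, expect_add_distrib, expect_sub_distrib, ← expect_mul, ← mul_expect,
      hmean, Fintype.expect_const]
    ring
  have hcent : 𝔼 v, (sign (P (x + v)) - bias P) = 0 := by
    rw [expect_sub_distrib, hmean, Fintype.expect_const, sub_self]
  rw [← hvar, ← expect_sq_sum_linearCombination hcent]
  simp_rw [sum_sub_distrib, sum_const, nsmul_eq_mul, card_filter_ne_zero, vote]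

/-- The points at which the vote along `b` does not point towards `P = 0`. -/
noncomputable def badSet [Fintype V] (b : Fin k → V) (P : V → ZMod 2) : Finset V :=
  {x | vote b P x ≤ 0}

/-- Chebyshev's inequality for the votes, averaged over the points. -/
lemma exists_card_badSet_mul_le [Fintype V] (hk : 0 < k) {P : V → ZMod 2} (hP : 0 < bias P) :
    ∃ b : Fin k → V, #(badSet b P) * ((2 ^ k - 1) * bias P ^ 2) ≤
      Fintype.card V * (1 - bias P ^ 2) := by
  have hT : (0 : ℝ) < 2 ^ k - 1 := sub_pos.mpr (one_lt_pow₀ one_lt_two hk.ne')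
  have hcheb (b : Fin k → V) (x : V) : (if vote b P x ≤ 0 then 1 else 0) *
      ((2 ^ k - 1) * bias P) ^ 2 ≤ (vote b P x - (2 ^ k - 1) * bias P) ^ 2 := by
    split_ifs with h
    · nlinarith [mul_pos hT hP]
    · simpa using sq_nonneg _
  have hmean : 𝔼 b : Fin k → V, #(badSet b P) * ((2 ^ k - 1) * bias P) ^ 2 ≤
      Fintype.card V * ((2 ^ k - 1) * (1 - bias P ^ 2)) :=
    calc 𝔼 b : Fin k → V, #(badSet b P) * ((2 ^ k - 1) * bias P) ^ 2
        ≤ 𝔼 b : Fin k → V, ∑ x, (vote b P x - (2 ^ k - 1) * bias P) ^ 2 := by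
          refine expect_le_expect fun b _ => ?_
          rw [badSet, ← sum_boole, sum_mul]
          exact sum_le_sum fun x _ => hcheb b x
      _ = Fintype.card V * ((2 ^ k - 1) * (1 - bias P ^ 2)) := by
          simp_rw [expect_sum_comm, expect_sq_vote_sub, sum_const, nsmul_eq_mul, card_univ]
  obtain ⟨b, -, hb⟩ := exists_le_of_expect_le univ_nonempty (hmean.trans_eq
    (Fintype.expect_const (ι := Fin k → V) _).symm)
  rw [Fintype.expect_const] at hb
  refine ⟨b, le_of_mul_le_mul_left ?_ hT⟩
  linarith

end Vote

section Derivatives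

variable {V M : Type*} [AddCommGroup V] [AddCommGroup M]

lemma fwdDiff_eq_zero_iff {b : V} {Q : V → M} : Δ_[b] Q = 0 ↔ Periodic Q b := by
  simp [funext_iff, fwdDiff, sub_eq_zero, Periodic]

lemma hammingNorm_comp_equiv {X Y α : Type*} [Fintype X] [Fintype Y] [Zero α] [DecidableEq α]
    (e : X ≃ Y) (P : Y → α) : hammingNorm (P ∘ e) = hammingNorm P := by
  simp only [hammingNorm]
  exact card_equiv e fun x => by simp

lemma hammingNorm_fwdDiff_le [Fintype V] [DecidableEq M] (b : V) (P : V → M) :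
    hammingNorm (Δ_[b] P) ≤ 2 * hammingNorm P := by
  calc hammingNorm (Δ_[b] P)
      = hammingDist P (P ∘ Equiv.addRight b) := by
        rw [hammingDist_eq_hammingNorm, neg_add_eq_sub]; rfl
    _ ≤ hammingDist P 0 + hammingDist 0 (P ∘ Equiv.addRight b) := hammingDist_triangle ..
    _ = 2 * hammingNorm P := by
        rw [hammingDist_zero_right, hammingDist_zero_left, hammingNorm_comp_equiv, two_mul]

lemma hammingNorm_eq_card_of_fwdDiff_eq_zero [Fintype V] [DecidableEq M] {P : V → M} (h0 : P ≠ 0)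
    (h : ∀ b, Δ_[b] P = 0) : hammingNorm P = Fintype.card V := by
  obtain ⟨y, hy⟩ := Function.ne_iff.mp h0
  rw [hammingNorm, filter_true_of_mem, card_univ]
  intro x _
  have hxy := fwdDiff_eq_zero_iff.mp (h (x - y)) y
  rw [add_sub_cancel] at hxy
  rwa [hxy]

variable [Module (ZMod 2) V] {k : ℕ}

lemma periodic_linearCombination {α : Type*} {b : Fin k → V} {Q : V → α} (h : ∀ i, Periodic Q (b i))
    (c : Fin k → ZMod 2) : Periodic Q (Fintype.linearCombination (ZMod 2) b c) := by
  rw [Fintype.linearCombination_apply]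
  refine sum_induction _ (Periodic Q) (fun _ _ => Periodic.add_period) (by simp [Periodic])
    fun i _ => ?_
  by_cases hc : c i = 0
  · simp [hc, Periodic]
  · simpa [eq_one_of_ne_zero hc] using h i

/-- If `P` and `P'` differ at `x`, then they differ on the whole flat through `x`, so that their
votes are opposite. -/
lemma mem_badSet_of_fwdDiff_eq [Fintype V] [DecidableEq V] {b : Fin k → V} {P P' : V → ZMod 2}
    (h : ∀ i, Δ_[b i] P = Δ_[b i] P') {x : V} (hx : P x ≠ P' x) :
    x ∈ badSet b P ∪ badSet b P' := by
  have hper (i) : Periodic (P - P') (b i) := fun y =>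
    sub_eq_sub_iff_sub_eq_sub.mp (congrFun (h i) y)
  have hvote : vote b P x = -vote b P' x := by
    rw [vote, vote, ← sum_neg_distrib]
    refine sum_congr rfl fun c _ => ?_
    have hsub := periodic_linearCombination hper c x
    rw [Pi.sub_apply, Pi.sub_apply, eq_one_of_ne_zero (sub_ne_zero.mpr hx),
      sub_eq_iff_eq_add] at hsub
    rw [hsub, AddChar.map_add_eq_mul, sign_apply 1, if_neg one_ne_zero, neg_one_mul]
  simp only [badSet, mem_union, mem_filter, mem_univ, true_and, hvote, Left.neg_nonpos_iff]
  exact le_total _ _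

end Derivatives

section Codes

/-- The codewords of a linear code over `F₂` with finitely many coordinates, as a `Finset`. -/
noncomputable def codewords {X : Type*} [Fintype X] (C : Submodule (ZMod 2) (X → ZMod 2)) :
    Finset (X → ZMod 2) :=
  (Set.toFinite (C : Set (X → ZMod 2))).toFinset

/-- The codewords of relative weight at most `2^{-j}`. -/
noncomputable def lightWords {X : Type*} [Fintype X] (C : Submodule (ZMod 2) (X → ZMod 2))
    (j : ℕ) : Finset (X → ZMod 2) :=
  {P ∈ codewords C | 2 ^ j * hammingNorm P ≤ Fintype.card X}

variable {X : Type*} [Fintype X] {C : Submodule (ZMod 2) (X → ZMod 2)} {P : X → ZMod 2} {j : ℕ}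

lemma mem_codewords : P ∈ codewords C ↔ P ∈ C := by simp [codewords]

lemma mem_lightWords :
    P ∈ lightWords C j ↔ P ∈ C ∧ 2 ^ j * hammingNorm P ≤ Fintype.card X := by
  simp [lightWords, mem_codewords]

lemma card_codewords (C : Submodule (ZMod 2) (X → ZMod 2)) :
    #(codewords C) = 2 ^ Module.finrank (ZMod 2) C := by
  rw [codewords, ← Set.ncard_eq_toFinset_card]
  exact (Module.natCard_eq_pow_finrank (K := ZMod 2) (V := C)).trans (by rw [Nat.card_zmod])

variable {V : Type*} [Fintype V] [AddCommGroup V] [Module (ZMod 2) V]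

/-- Codewords with the same derivatives along `b` differ only on bad points, hence by a light
codeword. -/
lemma card_le_of_badSet {C : Submodule (ZMod 2) (V → ZMod 2)} {A : Finset (V → ZMod 2)} {k M : ℕ}
    (hA : A ⊆ codewords C)
    (hb : ∀ P ∈ A, ∃ b : Fin k → V, 2 ^ (j + 1) * #(badSet b P) ≤ Fintype.card V)
    (hM : ∀ b : Fin k → V, #(A.image fun P i => Δ_[b i] P) ≤ M) :
    #A ≤ Fintype.card V ^ k * (M * #(lightWords C j)) := by
  classical
  choose! b hb using hb
  have hfibre (b₀ : Fin k → V) (v : Fin k → V → ZMod 2) :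
      #{P ∈ A | b P = b₀ ∧ (Δ_[b₀ ·] P) = v} ≤ #(lightWords C j) := by
    obtain hempty | ⟨P₀, hP₀⟩ := eq_empty_or_nonempty {P ∈ A | b P = b₀ ∧ (Δ_[b₀ ·] P) = v}
    · simp [hempty]
    refine card_le_card_of_injOn (· - P₀) (fun P hP => ?_) sub_left_injective.injOn
    obtain ⟨hPA₀, hb₀, rfl⟩ := mem_filter.mp hP₀
    obtain ⟨hPA, rfl, hPv⟩ := mem_filter.mp hP
    refine mem_lightWords.mpr
      ⟨sub_mem (mem_codewords.mp (hA hPA)) (mem_codewords.mp (hA hPA₀)), ?_⟩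
    have hdiff : hammingNorm (P - P₀) ≤ #(badSet (b P) P) + #(badSet (b P) P₀) :=
      (card_le_card fun x hx => mem_badSet_of_fwdDiff_eq (congrFun hPv)
        (by simpa [sub_eq_zero] using hx)).trans (card_union_le _ _)
    have hbad := hb P hPA
    have hbad₀ := hb P₀ hPA₀
    rw [hb₀] at hbad₀
    rw [pow_succ] at hbad hbad₀
    nlinarith [Nat.mul_le_mul_left (2 ^ j) hdiff]
  have hdir (b₀ : Fin k → V) : #{P ∈ A | b P = b₀} ≤ #(lightWords C j) * M := by
    refine (card_le_mul_card_image (f := fun P i => Δ_[b₀ i] P) _ _ fun v _ => ?_).trans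
      (Nat.mul_le_mul_left _
        ((card_le_card (image_subset_image (filter_subset _ _))).trans (hM b₀)))
    rw [filter_filter]
    exact hfibre b₀ v
  calc #A ≤ #(lightWords C j) * M * #(A.image b) := card_le_mul_card_image A _ fun b₀ _ => hdir b₀
    _ ≤ #(lightWords C j) * M * Fintype.card V ^ k := by
        gcongr
        exact (card_le_univ _).trans_eq (by simp)
    _ = _ := by ring

end Codes

section Erasures

variable {X : Type*}

/-- The code `D` recovers from erasures on `Z`. -/
def Recovers (D : Submodule (ZMod 2) (X → ZMod 2)) (Z : Finset X) : Prop :=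
  ∀ f ∈ D, support f ⊆ (Z : Set X) → f = 0

open Classical in
/-- The subsets of `Z` on which every codeword of `C` sums to zero, i.e. the supports of the
codewords of the dual of `C` that are contained in `Z`. -/
noncomputable def dualSupports (C : Submodule (ZMod 2) (X → ZMod 2)) (Z : Finset X) :
    Finset (Finset X) :=
  {A ∈ Z.powerset | ∀ P ∈ C, ∑ x ∈ A, P x = 0}

variable {C D : Submodule (ZMod 2) (X → ZMod 2)} {Z : Finset X}

lemma mem_dualSupports {A : Finset X} :
    A ∈ dualSupports C Z ↔ A ⊆ Z ∧ ∀ P ∈ C, ∑ x ∈ A, P x = 0 := by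
  classical rw [dualSupports, mem_filter, mem_powerset]

lemma empty_mem_dualSupports (C : Submodule (ZMod 2) (X → ZMod 2)) (Z : Finset X) :
    ∅ ∈ dualSupports C Z := by
  simp [mem_dualSupports]

lemma choose_mul_pow_le {a n : ℕ} (h : a ≤ n) (K : ℕ) :
    a.choose K * n ^ K ≤ a ^ K * n.choose K := by
  induction K with
  | zero => simp
  | succ K ih =>
    have hratio : (a - K) * n ≤ a * (n - K) := by
      rw [Nat.sub_mul, Nat.mul_sub, mul_comm a K]
      exact Nat.sub_le_sub_left (Nat.mul_le_mul_left _ h) _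
    refine Nat.le_of_mul_le_mul_right ?_ (Nat.succ_pos K)
    calc a.choose (K + 1) * n ^ (K + 1) * (K + 1)
        = a.choose (K + 1) * (K + 1) * n ^ (K + 1) := by ring
      _ = a.choose K * n ^ K * ((a - K) * n) := by rw [Nat.choose_succ_right_eq]; ring
      _ ≤ a ^ K * n.choose K * (a * (n - K)) := Nat.mul_le_mul ih hratio
      _ = a ^ (K + 1) * (n.choose K * (n - K)) := by ring
      _ = a ^ (K + 1) * n.choose (K + 1) * (K + 1) := by rw [← Nat.choose_succ_right_eq]; ring

variable [Fintype X]

lemma two_le_card_dualSupports (hCD : ∀ P ∈ C, ∀ f ∈ D, P ⬝ᵥ f = 0) (hZ : ¬ Recovers D Z) :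
    2 ≤ #(dualSupports C Z) := by
  simp only [Recovers, not_forall] at hZ
  obtain ⟨f, hf, hsupp, h0⟩ := hZ
  refine one_lt_card.mpr ⟨∅, empty_mem_dualSupports C Z, ({x | f x ≠ 0} : Finset X), ?_, ?_⟩
  · refine mem_dualSupports.mpr ⟨fun x hx => hsupp (mem_filter.mp hx).2, fun P hP => ?_⟩
    rw [sum_filter]
    refine (sum_congr rfl fun x _ => ?_).trans (hCD P hP f hf)
    split_ifs with hx
    · rw [eq_one_of_ne_zero hx, mul_one]
    · rw [not_not.mp hx, mul_zero]
  · obtain ⟨y, hy⟩ := Function.ne_iff.mp h0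
    exact (ne_empty_of_mem (mem_filter.mpr ⟨mem_univ y, hy⟩)).symm

lemma sum_sign_sum (C : Submodule (ZMod 2) (X → ZMod 2)) (A : Finset X)
    [Decidable (∀ P ∈ C, ∑ x ∈ A, P x = 0)] :
    ∑ P ∈ codewords C, sign (∑ x ∈ A, P x) =
      if ∀ P ∈ C, ∑ x ∈ A, P x = 0 then (#(codewords C) : ℝ) else 0 := by
  let ψ : AddChar C ℝ := sign.compAddMonoidHom
    ((∑ x ∈ A, LinearMap.proj x : (X → ZMod 2) →ₗ[ZMod 2] ZMod 2) ∘ₗ C.subtype).toAddMonoidHom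
  have hψ (P : C) : ψ P = sign (∑ x ∈ A, P.1 x) := by simp [ψ]
  have hψ0 : ψ = 0 ↔ ∀ P ∈ C, ∑ x ∈ A, P x = 0 := by
    simp only [AddChar.eq_zero_iff, hψ, sign_apply, Subtype.forall]
    norm_num
  have hfin := Fintype.ofFinite C
  have hcard : #(codewords C) = Fintype.card C :=
    (Fintype.card_of_subtype _ fun _ => mem_codewords).symm
  rw [sum_subtype (codewords C) (p := (· ∈ C)) (F := hfin) fun _ => mem_codewords, hcard]
  simp_rw [← hψ, ← hψ0]
  exact AddChar.sum_eq_ite ψ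

lemma card_dualSupports_mul (C : Submodule (ZMod 2) (X → ZMod 2)) (Z : Finset X) :
    (#(dualSupports C Z) * #(codewords C) : ℝ) =
      2 ^ #Z * #{P ∈ codewords C | ∀ x ∈ Z, P x = 0} := by
  have hprod (P : X → ZMod 2) :
      ∏ x ∈ Z, (1 + sign (P x)) = if ∀ x ∈ Z, P x = 0 then (2 : ℝ) ^ #Z else 0 := by
    split_ifs with h
    · rw [prod_congr rfl fun x hx => by rw [h x hx, AddChar.map_zero_eq_one], prod_const]
      norm_num
    · push Not at h
      obtain ⟨x, hx, hPx⟩ := h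
      exact prod_eq_zero hx (by rw [sign_apply, if_neg hPx]; norm_num)
  have hsum (A : Finset X) (P : X → ZMod 2) : sign (∑ x ∈ A, P x) = ∏ x ∈ A, sign (P x) :=
    map_prod sign.toMonoidHom (fun x => Multiplicative.ofAdd (P x)) A
  calc (#(dualSupports C Z) * #(codewords C) : ℝ)
      = ∑ A ∈ Z.powerset, ∑ P ∈ codewords C, sign (∑ x ∈ A, P x) := by
        rw [← nsmul_eq_mul, ← sum_const, dualSupports, sum_filter]
        exact sum_congr rfl fun A _ => by convert (sum_sign_sum C A).symm
    _ = ∑ P ∈ codewords C, ∏ x ∈ Z, (1 + sign (P x)) := by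
        rw [sum_comm]
        simp_rw [prod_one_add, hsum]
    _ = 2 ^ #Z * #{P ∈ codewords C | ∀ x ∈ Z, P x = 0} := by
        simp_rw [hprod, ← sum_filter, sum_const, nsmul_eq_mul]
        rw [mul_comm]

lemma two_pow_mul_choose_le [Nonempty X] (P : X → ZMod 2) (K : ℕ) :
    2 ^ K * (#{x | P x = 0}).choose K ≤ ((Fintype.card X).choose K : ℝ) * (1 + bias P) ^ K := by
  have hcard : (0 : ℝ) < Fintype.card X := by exact_mod_cast Fintype.card_pos
  have hchoose : ((#{x | P x = 0}).choose K * Fintype.card X ^ K : ℝ) ≤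
      #{x | P x = 0} ^ K * (Fintype.card X).choose K := by
    exact_mod_cast choose_mul_pow_le (card_le_univ {x | P x = 0}) K
  rw [one_add_bias, div_pow, mul_pow, mul_div_assoc', le_div_iff₀ (pow_pos hcard K)]
  calc _ = 2 ^ K * ((#{x | P x = 0}).choose K * Fintype.card X ^ K : ℝ) := by ring
    _ ≤ 2 ^ K * (#{x | P x = 0} ^ K * (Fintype.card X).choose K) := by gcongr
    _ = _ := by ring

/-- Double counting of the pairs of a `K`-subset `Z` and a codeword of `C` vanishing on `Z`. -/
lemma sum_card_dualSupports_mul_le [Nonempty X] (C : Submodule (ZMod 2) (X → ZMod 2)) (K : ℕ) :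
    (∑ Z ∈ powersetCard K univ, #(dualSupports C Z) : ℝ) * #(codewords C) ≤
      #(powersetCard K (univ : Finset X)) * ∑ P ∈ codewords C, (1 + bias P) ^ K := by
  have hvanish (P : X → ZMod 2) :
      #{Z ∈ powersetCard K univ | ∀ x ∈ Z, P x = 0} = (#{x | P x = 0}).choose K := by
    rw [← card_powersetCard]
    congr 1
    ext Z
    simp [mem_powersetCard, subset_iff, and_comm]
  calc (∑ Z ∈ powersetCard K univ, #(dualSupports C Z) : ℝ) * #(codewords C)
      = ∑ Z ∈ powersetCard K univ, (2 : ℝ) ^ K * #{P ∈ codewords C | ∀ x ∈ Z, P x = 0} := by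
        rw [sum_mul]
        refine sum_congr rfl fun Z hZ => ?_
        rw [card_dualSupports_mul, mem_powersetCard_univ.mp hZ]
    _ = ∑ P ∈ codewords C, (2 : ℝ) ^ K * (#{x | P x = 0}).choose K := by
        simp_rw [← mul_sum, ← hvanish, ← sum_boole]
        rw [sum_comm]
    _ ≤ ∑ P ∈ codewords C, ((Fintype.card X).choose K : ℝ) * (1 + bias P) ^ K :=
        sum_le_sum fun P _ => two_pow_mul_choose_le P K
    _ = _ := by rw [← mul_sum, card_powersetCard, card_univ]

/-- First moment bound: if `D` does not recover from `Z`, then `Z` contains the supports of at least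
two words of the dual of `C`. -/
lemma one_sub_mul_card_le_card_recovers [Nonempty X] (hCD : ∀ P ∈ C, ∀ f ∈ D, P ⬝ᵥ f = 0)
    {K : ℕ} {ρ : ℝ} (hρ : ∑ P ∈ codewords C, (1 + bias P) ^ K ≤ (1 + ρ) * #(codewords C)) :
    (1 - ρ) * Nat.card {Z : Finset X // #Z = K} ≤
      (Nat.card {Z : Finset X // #Z = K ∧ Recovers D Z} : ℝ) := by
  classical
  rw [Nat.subtype_card (powersetCard K univ) fun _ => mem_powersetCard_univ,
    Nat.subtype_card {Z ∈ powersetCard K univ | Recovers D Z} fun _ => by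
      rw [mem_filter, mem_powersetCard_univ]]
  have hpos : (0 : ℝ) < #(codewords C) := by rw [card_codewords]; positivity
  have hmean : (∑ Z ∈ powersetCard K univ, #(dualSupports C Z) : ℝ) ≤
      (1 + ρ) * #(powersetCard K (univ : Finset X)) := by
    refine le_of_mul_le_mul_right ((sum_card_dualSupports_mul_le C K).trans ?_) hpos
    calc _ ≤ (#(powersetCard K (univ : Finset X)) : ℝ) * ((1 + ρ) * #(codewords C)) := by gcongr
      _ = _ := by ring
  have hcount (Z : Finset X) :
      2 - (if Recovers D Z then 1 else 0) ≤ (#(dualSupports C Z) : ℝ) := by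
    split_ifs with hZ
    · have : (1 : ℝ) ≤ #(dualSupports C Z) := by
        exact_mod_cast card_pos.mpr ⟨∅, empty_mem_dualSupports C Z⟩
      linarith
    · have : (2 : ℝ) ≤ #(dualSupports C Z) := by exact_mod_cast two_le_card_dualSupports hCD hZ
      linarith
  have hsum := sum_le_sum fun Z (_ : Z ∈ powersetCard K univ) => hcount Z
  rw [sum_sub_distrib, sum_boole, sum_const, nsmul_eq_mul] at hsum
  linarith

end Erasures

section ReedMullerCodes

/-- The space `F₂^m`. -/
abbrev Point (m : ℕ) := Fin m → ZMod 2

/-- The function computed by the multilinear monomial with variables `S`. -/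
def monomial {m : ℕ} (S : Finset (Fin m)) : Point m → ZMod 2 := fun z => ∏ i ∈ S, z i

/-- The Reed–Muller code `RM(m,r)` as a space of functions. The coordinates of `RMcode`
are the coefficients of its elements in the basis of monomials. -/
def RM (m r : ℕ) : Submodule (ZMod 2) (Point m → ZMod 2) :=
  Submodule.span (ZMod 2) (monomial '' {S | #S ≤ r})

variable {m r s : ℕ} {P Q : Point m → ZMod 2}

lemma RM_le_iff {N : Submodule (ZMod 2) (Point m → ZMod 2)} :
    RM m r ≤ N ↔ ∀ S : Finset (Fin m), #S ≤ r → monomial S ∈ N := by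
  rw [RM, Submodule.span_le, Set.image_subset_iff]
  rfl

lemma monomial_mem_RM {S : Finset (Fin m)} (h : #S ≤ r) : monomial S ∈ RM m r :=
  RM_le_iff.mp le_rfl S h

lemma RM_mono (h : r ≤ s) : RM m r ≤ RM m s :=
  RM_le_iff.mpr fun _ hS => monomial_mem_RM (hS.trans h)

lemma monomial_apply (S : Finset (Fin m)) (z : Point m) :
    monomial S z = if ∀ i ∈ S, z i = 1 then 1 else 0 := by
  split_ifs with h
  · exact prod_eq_one h
  · push Not at h
    obtain ⟨i, hi, hz⟩ := h
    exact prod_eq_zero hi (not_not.mp (mt eq_one_of_ne_zero hz))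

lemma linearIndependent_monomial (m : ℕ) :
    LinearIndependent (ZMod 2) (monomial : Finset (Fin m) → Point m → ZMod 2) := by
  rw [Fintype.linearIndependent_iff]
  intro g hg S
  induction S using Finset.strongInduction with
  | H S ih =>
    have heval := congrFun hg fun i => if i ∈ S then 1 else 0
    have hmono (T : Finset (Fin m)) :
        monomial T (fun i => if i ∈ S then 1 else 0) = if T ⊆ S then 1 else 0 := by
      simp [monomial_apply, subset_iff]
    simp only [Finset.sum_apply, Pi.smul_apply, hmono, smul_eq_mul, mul_ite, mul_one, mul_zero,
      Pi.zero_apply] at heval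
    rwa [sum_eq_single_of_mem S (mem_univ S), if_pos Subset.rfl] at heval
    intro T _ hTS
    split_ifs with hT
    exacts [ih T (hT.ssubset_of_ne hTS), rfl]

lemma evalLin_eq_linearCombination (c : RMcode m r) (z : Point m) :
    evalLin m r z c =
      Fintype.linearCombination (ZMod 2) (fun S : MonIdx m r => monomial S.1) c z := by
  simp [evalLin, Fintype.linearCombination_apply, monomial, mul_comm]

lemma linearIndependent_monIdx (m r : ℕ) :
    LinearIndependent (ZMod 2) fun S : MonIdx m r => monomial S.1 :=
  (linearIndependent_monomial m).comp _ Subtype.val_injective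

lemma RM_eq_span_range (m r : ℕ) :
    RM m r = Submodule.span (ZMod 2) (Set.range fun S : MonIdx m r => monomial S.1) := by
  rw [RM, Set.image_eq_range]
  rfl

lemma card_monIdx (m r : ℕ) : Fintype.card (MonIdx m r) = binomLe m r := by
  have hunion : ({S | #S ≤ r} : Finset (Finset (Fin m))) =
      (range (r + 1)).biUnion fun i => powersetCard i univ := by
    ext S
    simp
  rw [Fintype.card_subtype, hunion, card_biUnion fun i _ j _ hij =>
    Finset.pairwise_disjoint_powersetCard _ hij]
  simp [binomLe]

lemma card_codewords_RM (m r : ℕ) : #(codewords (RM m r)) = 2 ^ binomLe m r := by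
  rw [card_codewords, RM_eq_span_range, finrank_span_eq_card (linearIndependent_monIdx m r),
    card_monIdx]

lemma one_mem_RM : (1 : Point m → ZMod 2) ∈ RM m r := by
  have hone : (1 : Point m → ZMod 2) = monomial ∅ := by ext; simp [monomial]
  exact hone ▸ monomial_mem_RM (by simp)

lemma monomial_mul (S T : Finset (Fin m)) : monomial S * monomial T = monomial (S ∪ T) := by
  ext z
  simp only [Pi.mul_apply, monomial_apply, mem_union, or_imp, forall_and]
  split_ifs <;> simp_all

lemma mul_mem_RM (hP : P ∈ RM m r) (hQ : Q ∈ RM m s) : P * Q ∈ RM m (r + s) := by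
  have hle : RM m r * RM m s ≤ RM m (r + s) := by
    rw [RM, RM, Submodule.span_mul_span, Submodule.span_le]
    rintro _ ⟨_, ⟨S, hS, rfl⟩, _, ⟨T, hT, rfl⟩, rfl⟩
    simp only [monomial_mul, SetLike.mem_coe]
    exact monomial_mem_RM ((card_union_le S T).trans (add_le_add hS hT))
  exact hle (Submodule.mul_mem_mul hP hQ)

lemma prod_mem_RM {ι : Type*} {t : Finset ι} {f : ι → Point m → ZMod 2}
    (hf : ∀ i ∈ t, f i ∈ RM m 1) : ∏ i ∈ t, f i ∈ RM m #t := by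
  classical
  induction t using Finset.induction_on with
  | empty => exact one_mem_RM
  | insert i t hi ih =>
    rw [prod_insert hi, card_insert_of_notMem hi, add_comm]
    exact mul_mem_RM (hf i (mem_insert_self i t)) (ih fun j hj => hf j (mem_insert_of_mem hj))

lemma linear_mem_RM_one (φ : Point m →ₗ[ZMod 2] ZMod 2) : ⇑φ ∈ RM m 1 := by
  have hsum : ⇑φ = ∑ i, φ (Pi.single i 1) • monomial {i} := by
    ext z
    conv_lhs => rw [pi_eq_sum_univ' z]
    simp [monomial, mul_comm]
  exact hsum ▸ sum_mem fun i _ => Submodule.smul_mem _ _ (monomial_mem_RM (by simp))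

lemma comp_mem_RM {n : ℕ} (L : Point m →ₗ[ZMod 2] Point n) {Q : Point n → ZMod 2}
    (hQ : Q ∈ RM n r) : Q ∘ L ∈ RM m r := by
  have hle : RM n r ≤ (RM m r).comap (LinearMap.funLeft (ZMod 2) (ZMod 2) L) := by
    refine RM_le_iff.mpr fun S hS => RM_mono hS ?_
    have hprod : LinearMap.funLeft (ZMod 2) (ZMod 2) L (monomial S) =
        ∏ i ∈ S, ⇑(LinearMap.proj i ∘ₗ L) := by
      ext z
      simp [monomial]
    exact hprod ▸ prod_mem_RM fun i _ => linear_mem_RM_one _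
  exact hle hQ

lemma sum_eq_zero_of_mem_RM (hr : r < m) (hP : P ∈ RM m r) : ∑ x, P x = 0 := by
  have hle : RM m r ≤ LinearMap.ker (∑ x : Point m, LinearMap.proj x) := by
    refine RM_le_iff.mpr fun S hS => ?_
    obtain ⟨i, hi⟩ : ∃ i, i ∉ S := by
      by_contra! h
      rw [(eq_univ_iff_forall.mpr h), card_univ, Fintype.card_fin] at hS
      omega
    have hmono (x : Point m) : monomial S x = ∏ j, if j ∈ S then x j else 1 := by
      simp [monomial, prod_ite_mem]
    have hfactor : ∑ x : Point m, monomial S x = ∏ j, ∑ a : ZMod 2, if j ∈ S then a else 1 := by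
      simp_rw [Fintype.prod_sum, hmono]
    simp only [LinearMap.mem_ker, LinearMap.sum_apply, LinearMap.proj_apply, hfactor]
    refine prod_eq_zero (mem_univ i) ?_
    simp only [hi, if_false]
    decide
  simpa using hle hP

lemma dotProduct_eq_zero_of_mem_RM (h : r + s < m) (hP : P ∈ RM m r) (hQ : Q ∈ RM m s) :
    P ⬝ᵥ Q = 0 :=
  sum_eq_zero_of_mem_RM h (mul_mem_RM hP hQ)

lemma fwdDiff_monomial (b : Point m) (S : Finset (Fin m)) :
    Δ_[b] (monomial S) = ∑ T ∈ S.ssubsets, (∏ i ∈ S \ T, b i) • monomial T := by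
  ext x
  simp only [fwdDiff, monomial, Pi.add_apply, prod_add, Finset.sum_apply, Pi.smul_apply,
    smul_eq_mul]
  rw [ssubsets, sum_erase_eq_sub (mem_powerset_self S)]
  simp [mul_comm]

lemma fwdDiff_mem_of_mem_RM {N : Submodule (ZMod 2) (Point m → ZMod 2)}
    (hN : ∀ S : Finset (Fin m), #S < r → monomial S ∈ N) (b : Point m) (hP : P ∈ RM m r) :
    Δ_[b] P ∈ N := by
  induction hP using Submodule.span_induction with
  | mem P hP =>
    obtain ⟨S, hS, rfl⟩ := hP
    rw [fwdDiff_monomial]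
    exact sum_mem fun T hT => N.smul_mem _
      (hN T ((card_lt_card (mem_ssubsets.mp hT)).trans_le hS))
  | zero => exact (fwdDiff_const b (0 : ZMod 2)).symm ▸ N.zero_mem
  | add P Q _ _ hP hQ => exact fwdDiff_add b P Q ▸ N.add_mem hP hQ
  | smul c P _ hP => exact fwdDiff_const_smul b c P ▸ N.smul_mem c hP

lemma fwdDiff_mem_RM (b : Point m) (hP : P ∈ RM m (r + 1)) : Δ_[b] P ∈ RM m r :=
  fwdDiff_mem_of_mem_RM (fun _ hS => monomial_mem_RM (Nat.le_of_lt_succ hS)) b hP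

lemma fwdDiff_eq_zero_of_mem_RM_zero (b : Point m) (hP : P ∈ RM m 0) : Δ_[b] P = 0 :=
  (Submodule.mem_bot (ZMod 2)).mp
    (fwdDiff_mem_of_mem_RM (fun _ hS => absurd hS (Nat.not_lt_zero _)) b hP)

/-- A nonzero derivative has degree `r - 1` and at most doubles the weight. -/
lemma two_pow_le_mul_hammingNorm (hP : P ∈ RM m r) (h0 : P ≠ 0) :
    2 ^ m ≤ 2 ^ r * hammingNorm P := by
  induction r generalizing P with
  | zero =>
    rw [hammingNorm_eq_card_of_fwdDiff_eq_zero h0 (fwdDiff_eq_zero_of_mem_RM_zero · hP)]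
    simp
  | succ r ih =>
    by_cases h : ∀ b, Δ_[b] P = 0
    · rw [hammingNorm_eq_card_of_fwdDiff_eq_zero h0 h]
      simpa using Nat.le_mul_of_pos_left (2 ^ m) (Nat.two_pow_pos (r + 1))
    · push Not at h
      obtain ⟨b, hb⟩ := h
      calc 2 ^ m ≤ 2 ^ r * hammingNorm (Δ_[b] P) := ih (fwdDiff_mem_RM b hP) hb
        _ ≤ 2 ^ r * (2 * hammingNorm P) := Nat.mul_le_mul_left _ (hammingNorm_fwdDiff_le b P)
        _ = 2 ^ (r + 1) * hammingNorm P := by ring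

end ReedMullerCodes

section LightWords

variable {m r j : ℕ} {P : Point m → ZMod 2}

lemma card_lightWords_le_two_pow (m r j : ℕ) : #(lightWords (RM m r) j) ≤ 2 ^ binomLe m r :=
  (card_filter_le _ _).trans_eq (card_codewords_RM m r)

lemma lightWords_RM_subset (h : r < j) : lightWords (RM m r) j ⊆ {0} := by
  intro P hP
  obtain ⟨hPC, hPj⟩ := mem_lightWords.mp hP
  by_contra h0
  rw [mem_singleton] at h0
  have hdist := two_pow_le_mul_hammingNorm hPC h0
  have hlt : 2 ^ r * hammingNorm P < 2 ^ j * hammingNorm P :=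
    Nat.mul_lt_mul_of_pos_right (Nat.pow_lt_pow_right one_lt_two h) (hammingNorm_pos_iff.mpr h0)
  simp at hPj
  omega

lemma card_lightWords_le_one (h : r < j) : #(lightWords (RM m r) j) ≤ 1 :=
  card_le_card (lightWords_RM_subset h)

/-- At relative weight at most `1/4` the bias is at least `1/2`, so `2^7 - 1` votes reduce the
fraction of bad points by a factor `4`. -/
lemma exists_card_badSet_le_of_light {V : Type*} [Fintype V] [AddCommGroup V] [Module (ZMod 2) V]
    {P : V → ZMod 2} (hP : 4 * hammingNorm P ≤ Fintype.card V) :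
    ∃ b : Fin 7 → V, 4 * #(badSet b P) ≤ hammingNorm P := by
  have hV : (0 : ℝ) < Fintype.card V := by exact_mod_cast Fintype.card_pos
  have hP' : (4 * hammingNorm P : ℝ) ≤ Fintype.card V := by exact_mod_cast hP
  have hweight : (1 - bias P) * Fintype.card V = 2 * hammingNorm P := by
    rw [bias_eq_one_sub]
    field_simp
    ring
  have hbias : 1 / 2 ≤ bias P := by
    by_contra! h
    nlinarith
  have hbias1 : bias P ≤ 1 := by
    by_contra! h
    nlinarith [(hammingNorm P).cast_nonneg (α := ℝ)]
  obtain ⟨b, hb⟩ := exists_card_badSet_mul_le (k := 7) (by norm_num) (one_half_pos.trans_le hbias)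
  refine ⟨b, ?_⟩
  have hleft : (#(badSet b P) : ℝ) * (127 * (1 / 2) ^ 2) ≤
      #(badSet b P) * ((2 ^ 7 - 1) * bias P ^ 2) := by
    gcongr
    norm_num
  have hright : Fintype.card V * (1 - bias P ^ 2) ≤ 4 * hammingNorm P := by
    calc Fintype.card V * (1 - bias P ^ 2)
        = (1 - bias P) * Fintype.card V * (1 + bias P) := by ring
      _ ≤ 2 * hammingNorm P * 2 := by rw [hweight]; gcongr; linarith
      _ = 4 * hammingNorm P := by ring
  have : (4 * #(badSet b P) : ℝ) ≤ hammingNorm P := by linarith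
  exact_mod_cast this

lemma fwdDiff_mem_lightWords (b : Point m) (hP : P ∈ lightWords (RM m (r + 1)) (j + 1)) :
    Δ_[b] P ∈ lightWords (RM m r) j := by
  obtain ⟨hPC, hPj⟩ := mem_lightWords.mp hP
  refine mem_lightWords.mpr ⟨fwdDiff_mem_RM b hPC, ?_⟩
  calc 2 ^ j * hammingNorm (Δ_[b] P) ≤ 2 ^ j * (2 * hammingNorm P) :=
        Nat.mul_le_mul_left _ (hammingNorm_fwdDiff_le b P)
    _ = 2 ^ (j + 1) * hammingNorm P := by ring
    _ ≤ Fintype.card (Point m) := hPj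

lemma card_lightWords_le_mul (hj : 1 ≤ j) :
    #(lightWords (RM m (r + 1)) (j + 1)) ≤
      2 ^ (7 * m) * (#(lightWords (RM m r) j) ^ 7 * #(lightWords (RM m (r + 1)) (j + 2))) := by
  have hbad (P) (hP : P ∈ lightWords (RM m (r + 1)) (j + 1)) :
      ∃ b : Fin 7 → Point m, 2 ^ (j + 2 + 1) * #(badSet b P) ≤ Fintype.card (Point m) := by
    have hPj := (mem_lightWords.mp hP).2
    obtain ⟨b, hb⟩ := exists_card_badSet_le_of_light (P := P) <|
      (Nat.mul_le_mul_right _ (Nat.pow_le_pow_right two_pos (by omega : 2 ≤ j + 1))).trans hPj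
    refine ⟨b, le_trans ?_ hPj⟩
    calc 2 ^ (j + 2 + 1) * #(badSet b P) = 2 ^ (j + 1) * (4 * #(badSet b P)) := by ring
      _ ≤ 2 ^ (j + 1) * hammingNorm P := Nat.mul_le_mul_left _ hb
  have hderiv (b : Fin 7 → Point m) :
      #((lightWords (RM m (r + 1)) (j + 1)).image fun P i => Δ_[b i] P) ≤
        #(lightWords (RM m r) j) ^ 7 := by
    have hcard : #(Fintype.piFinset fun _ : Fin 7 => lightWords (RM m r) j) =
        #(lightWords (RM m r) j) ^ 7 := by simp
    exact hcard ▸ card_le_card (image_subset_iff.mpr fun P hP =>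
      Fintype.mem_piFinset.mpr fun i => fwdDiff_mem_lightWords (b i) hP)
  have hcount := card_le_of_badSet (A := lightWords (RM m (r + 1)) (j + 1))
    (filter_subset _ _) hbad hderiv
  simpa [← pow_mul, mul_comm] using hcount

/-- The recursion for the exponents of the bounds on the number of light codewords. -/
lemma exponent_add_le {m j : ℕ} {D D' : ℝ} (hD : 224 * D ≤ D') (hm : 56 * m * 2 ^ (j + 1) ≤ D') :
    7 * m + (7 * (4 * D / 2 ^ (j + 1)) + D' / 2 ^ (j + 3)) ≤ D' / 2 ^ (j + 2) := by
  have hdiff : D' / 2 ^ (j + 2) - (7 * m + (7 * (4 * D / 2 ^ (j + 1)) + D' / 2 ^ (j + 3))) =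
      (D' - 28 * m * 2 ^ (j + 1) - 112 * D) / (2 ^ (j + 1) * 4) := by
    field_simp
    ring
  rw [← sub_nonneg, hdiff]
  exact div_nonneg (by linarith) (by positivity)

/-- Induction along the recursion `card_lightWords_le_mul`, which lowers `r` or raises `j`. -/
lemma card_lightWords_le_rpow (r j : ℕ) (hj : 2 ≤ j)
    (hgrowth : ∀ s < r, 224 * binomLe m s ≤ binomLe m (s + 1))
    (hlarge : ∀ s, 2 ≤ s → s ≤ r → 56 * m * 2 ^ s ≤ binomLe m s) :
    (#(lightWords (RM m r) j) : ℝ) ≤ 2 ^ (binomLe m r / 2 ^ (j + 1) : ℝ) := by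
  by_cases hrj : r < j
  · have hone : (#(lightWords (RM m r) j) : ℝ) ≤ 1 := by
      exact_mod_cast card_lightWords_le_one hrj
    exact hone.trans (Real.one_le_rpow one_le_two (by positivity))
  obtain ⟨r, rfl⟩ : ∃ s, r = s + 1 := ⟨r - 1, by omega⟩
  obtain ⟨j, rfl⟩ : ∃ i, j = i + 1 := ⟨j - 1, by omega⟩
  have hderiv : (#(lightWords (RM m r) j) : ℝ) ≤ 2 ^ (4 * binomLe m r / 2 ^ (j + 1) : ℝ) := by
    obtain rfl | hj2 := (show 1 ≤ j by omega).eq_or_lt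
    · have hall := card_lightWords_le_two_pow m r 1
      have : (4 * binomLe m r / 2 ^ (1 + 1) : ℝ) = binomLe m r := by ring
      rw [this, Real.rpow_natCast]
      exact_mod_cast hall
    · refine (card_lightWords_le_rpow r j hj2 (fun s hs => hgrowth s (by omega))
        fun s hs hs' => hlarge s hs (by omega)).trans
        (Real.rpow_le_rpow_of_exponent_le one_le_two ?_)
      gcongr
      linarith [(binomLe m r).cast_nonneg (α := ℝ)]
  have hlighter := card_lightWords_le_rpow (r + 1) (j + 2) (by omega) hgrowth hlarge
  have hD : (224 * binomLe m r : ℝ) ≤ binomLe m (r + 1) := by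
    exact_mod_cast hgrowth r (by omega)
  have hm : (56 * m * 2 ^ (j + 1) : ℝ) ≤ binomLe m (r + 1) := by
    exact_mod_cast (Nat.mul_le_mul_left _ (Nat.pow_le_pow_right two_pos (by omega))).trans
      (hlarge (r + 1) (by omega) le_rfl)
  calc (#(lightWords (RM m (r + 1)) (j + 1)) : ℝ)
      ≤ 2 ^ (7 * m) * (#(lightWords (RM m r) j) ^ 7 * #(lightWords (RM m (r + 1)) (j + 2))) := by
        exact_mod_cast card_lightWords_le_mul (by omega)
    _ ≤ 2 ^ (7 * m) * ((2 ^ (4 * binomLe m r / 2 ^ (j + 1) : ℝ)) ^ 7 *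
          2 ^ (binomLe m (r + 1) / 2 ^ (j + 3) : ℝ)) := by gcongr
    _ = 2 ^ (7 * m + (7 * (4 * binomLe m r / 2 ^ (j + 1)) +
          binomLe m (r + 1) / 2 ^ (j + 3)) : ℝ) := by
        rw [Real.rpow_add two_pos, Real.rpow_add two_pos, mul_comm (7 : ℝ) (4 * _ / _),
          Real.rpow_mul zero_le_two 7, Real.rpow_mul zero_le_two _ 7, Real.rpow_natCast,
          Real.rpow_ofNat, Real.rpow_ofNat, pow_mul]
    _ ≤ 2 ^ (binomLe m (r + 1) / 2 ^ (j + 1 + 1) : ℝ) :=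
        Real.rpow_le_rpow_of_exponent_le one_le_two (exponent_add_le hD hm)
termination_by 2 * r - j

end LightWords

section BiasedWords

variable {m : ℕ}

lemma exists_surjective_linearMap_eq_zero {k : ℕ} (b : Fin k → Point m) :
    ∃ L : Point m →ₗ[ZMod 2] Point (m - k), Surjective L ∧ ∀ i, L (b i) = 0 := by
  set W : Submodule (ZMod 2) (Point m) := Submodule.span (ZMod 2) (Set.range b)
  have hW : Module.finrank (ZMod 2) W ≤ k :=
    (finrank_range_le_card b).trans_eq (Fintype.card_fin k)
  have hquot : m - k ≤ Module.finrank (ZMod 2) (Point m ⧸ W) := by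
    have := W.finrank_quotient_add_finrank
    rw [Module.finrank_fin_fun] at this
    omega
  let e := (Module.finBasis (ZMod 2) (Point m ⧸ W)).equivFun
  refine ⟨LinearMap.funLeft (ZMod 2) (ZMod 2) (Fin.castLE hquot) ∘ₗ e.toLinearMap ∘ₗ W.mkQ,
    ?_, fun i => ?_⟩
  · rw [LinearMap.coe_comp, LinearMap.coe_comp]
    exact (LinearMap.funLeft_surjective_of_injective _ _ _ (Fin.castLE_injective hquot)).comp
      (e.surjective.comp W.mkQ_surjective)
  · have hbi : W.mkQ (b i) = 0 := by
      simpa using Submodule.subset_span (Set.mem_range_self i)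
    simp only [LinearMap.comp_apply, hbi, map_zero]

/-- Adding to a codeword one that factors through the quotient by the directions `b` does not change
its derivatives along `b`. -/
lemma two_pow_mul_card_image_fwdDiff_le {k : ℕ} (r : ℕ) (b : Fin k → Point m) :
    2 ^ binomLe (m - k) r * #((codewords (RM m r)).image fun P i => Δ_[b i] P) ≤
      2 ^ binomLe m r := by
  rw [← card_codewords_RM m r]
  obtain ⟨L, hL, hb⟩ := exists_surjective_linearMap_eq_zero b
  refine mul_card_image_le_card _ _ fun v hv => ?_
  obtain ⟨P, hP, rfl⟩ := mem_image.mp hv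
  rw [← card_codewords_RM]
  refine card_le_card_of_injOn (fun Q => P + Q ∘ L) (fun Q hQ => ?_) fun Q _ Q' _ h =>
    hL.injective_comp_right (add_left_cancel h)
  refine mem_filter.mpr ⟨mem_codewords.mpr (add_mem (mem_codewords.mp hP)
    (comp_mem_RM L (mem_codewords.mp hQ))), ?_⟩
  ext i x
  simp [fwdDiff, hb]

/-- The codewords of bias at least `2^{-l}`. -/
noncomputable def biasedWords {X : Type*} [Fintype X] (C : Submodule (ZMod 2) (X → ZMod 2))
    (l : ℕ) : Finset (X → ZMod 2) :=
  {P ∈ codewords C | 1 ≤ 2 ^ l * bias P}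

lemma exists_card_badSet_le_of_biased {V : Type*} [Fintype V] [AddCommGroup V]
    [Module (ZMod 2) V] {l : ℕ} {P : V → ZMod 2} (hP : 1 ≤ 2 ^ l * bias P) :
    ∃ b : Fin (4 * l + 6) → V, 2 ^ (2 * l + 5) * #(badSet b P) ≤ Fintype.card V := by
  have hpos : 0 < bias P := pos_of_mul_pos_right (one_pos.trans_le hP) (by positivity)
  obtain ⟨b, hb⟩ := exists_card_badSet_mul_le (k := 4 * l + 6) (by omega) hpos
  refine ⟨b, ?_⟩
  have hvotes : (2 : ℝ) ^ (4 * l + 5) ≤ 2 ^ (4 * l + 6) - 1 := by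
    have : (1 : ℝ) ≤ 2 ^ (4 * l + 5) := one_le_pow₀ one_le_two
    rw [pow_succ _ (4 * l + 5)]
    linarith
  have hfactor : (2 : ℝ) ^ (2 * l + 5) ≤ (2 ^ (4 * l + 6) - 1) * bias P ^ 2 :=
    calc (2 : ℝ) ^ (2 * l + 5) ≤ 2 ^ (2 * l + 5) * (2 ^ l * bias P) ^ 2 :=
          le_mul_of_one_le_right (by positivity) (one_le_pow₀ hP)
      _ = 2 ^ (4 * l + 5) * bias P ^ 2 := by ring
      _ ≤ (2 ^ (4 * l + 6) - 1) * bias P ^ 2 := by gcongr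
  have : (2 : ℝ) ^ (2 * l + 5) * #(badSet b P) ≤ Fintype.card V :=
    calc (2 : ℝ) ^ (2 * l + 5) * #(badSet b P)
        ≤ (2 ^ (4 * l + 6) - 1) * bias P ^ 2 * #(badSet b P) := by gcongr
      _ = #(badSet b P) * ((2 ^ (4 * l + 6) - 1) * bias P ^ 2) := by ring
      _ ≤ Fintype.card V * (1 - bias P ^ 2) := hb
      _ ≤ Fintype.card V := mul_le_of_le_one_right (by positivity) (sub_le_self _ (sq_nonneg _))
  exact_mod_cast this

lemma card_biasedWords_mul_le (m r l : ℕ) :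
    2 ^ binomLe (m - (4 * l + 6)) r * #(biasedWords (RM m r) l) ≤
      2 ^ (m * (4 * l + 6)) * (2 ^ binomLe m r * #(lightWords (RM m r) (2 * l + 4))) := by
  obtain ⟨M, hM⟩ : 2 ^ binomLe (m - (4 * l + 6)) r ∣ 2 ^ binomLe m r :=
    Nat.pow_dvd_pow _ (sum_le_sum fun i _ => Nat.choose_le_choose i (Nat.sub_le _ _))
  have hcount : #(biasedWords (RM m r) l) ≤
      Fintype.card (Point m) ^ (4 * l + 6) * (M * #(lightWords (RM m r) (2 * l + 4))) := by
    refine card_le_of_badSet (filter_subset _ _)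
      (fun P hP => exists_card_badSet_le_of_biased (mem_filter.mp hP).2) fun b => ?_
    have hderiv := two_pow_mul_card_image_fwdDiff_le r b
    rw [hM] at hderiv
    exact (card_le_card (image_subset_image (filter_subset _ _))).trans
      (Nat.le_of_mul_le_mul_left hderiv (by positivity))
  calc _ ≤ 2 ^ binomLe (m - (4 * l + 6)) r * (Fintype.card (Point m) ^ (4 * l + 6) *
          (M * #(lightWords (RM m r) (2 * l + 4)))) := Nat.mul_le_mul_left _ hcount
    _ = _ := by rw [hM]; simp [← pow_mul]; ring

end BiasedWords

section Binomials

variable {m r : ℕ}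

lemma one_add_pow_le_exp {x : ℝ} (hx : -1 ≤ x) (n : ℕ) : (1 + x) ^ n ≤ Real.exp (n * x) := by
  rw [Real.exp_nat_mul]
  exact pow_le_pow_left₀ (by linarith) (by linarith [Real.add_one_le_exp x]) n

lemma choose_le_binomLe {i : ℕ} (m : ℕ) (h : i ≤ r) : m.choose i ≤ binomLe m r :=
  single_le_sum (f := m.choose) (fun _ _ => Nat.zero_le _) (mem_range_succ_iff.mpr h)

lemma binomLe_succ_succ (m r : ℕ) :
    binomLe (m + 1) (r + 1) = binomLe m (r + 1) + binomLe m r := by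
  rw [binomLe, binomLe, binomLe, sum_range_succ' _ (r + 1), sum_range_succ' _ (r + 1)]
  simp only [Nat.choose_succ_succ', sum_add_distrib, Nat.choose_zero_right]
  ring

lemma mul_binomLe_le {c : ℕ} (h : (c + 1) * (r + 1) ≤ m) :
    c * binomLe m r ≤ binomLe m (r + 1) := by
  rw [binomLe, binomLe, mul_sum, sum_range_succ' _ (r + 1)]
  refine le_add_right (sum_le_sum fun i hi => ?_)
  have hratio : c * (i + 1) ≤ m - i := by
    have : (c + 1) * (i + 1) ≤ m := (Nat.mul_le_mul_left _ (mem_range.mp hi)).trans h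
    rw [add_one_mul] at this
    omega
  refine Nat.le_of_mul_le_mul_right ?_ (Nat.succ_pos i)
  calc c * m.choose i * (i + 1) = m.choose i * (c * (i + 1)) := by ring
    _ ≤ m.choose i * (m - i) := Nat.mul_le_mul_left _ hratio
    _ = m.choose (i + 1) * (i + 1) := (Nat.choose_succ_right_eq m i).symm

lemma pow_mul_binomLe_add_le {c : ℕ} (k : ℕ) (h : (c + 1) * (r + 1) ≤ m) :
    c ^ k * binomLe (m + k) (r + 1) ≤ (c + 1) ^ k * binomLe m (r + 1) := by
  induction k with
  | zero => simp
  | succ k ih =>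
    have hgrowth : c * binomLe (m + k) r ≤ binomLe (m + k) (r + 1) :=
      mul_binomLe_le (h.trans (Nat.le_add_right _ _))
    have hstep : c * binomLe (m + k + 1) (r + 1) ≤ (c + 1) * binomLe (m + k) (r + 1) := by
      rw [binomLe_succ_succ]
      linarith
    calc c ^ (k + 1) * binomLe (m + (k + 1)) (r + 1)
        = c ^ k * (c * binomLe (m + k + 1) (r + 1)) := by rw [← add_assoc]; ring
      _ ≤ c ^ k * ((c + 1) * binomLe (m + k) (r + 1)) := Nat.mul_le_mul_left _ hstep
      _ = (c + 1) * (c ^ k * binomLe (m + k) (r + 1)) := by ring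
      _ ≤ (c + 1) * ((c + 1) ^ k * binomLe m (r + 1)) := Nat.mul_le_mul_left _ ih
      _ = (c + 1) ^ (k + 1) * binomLe m (r + 1) := by ring

lemma mul_pred_le_two_mul_binomLe (m : ℕ) (hr : 2 ≤ r) : m * (m - 1) ≤ 2 * binomLe m r := by
  have hchoose : m.choose 2 * 2 = m * (m - 1) := by
    rw [Nat.choose_succ_right_eq, Nat.choose_one_right]
  linarith [choose_le_binomLe m hr]

lemma mul_two_pow_le_binomLe {s : ℕ} (hm : 449 ≤ m) (hs : 2 ≤ s) (h : 3 * s ≤ m) :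
    56 * m * 2 ^ s ≤ binomLe m s := by
  induction s, hs using Nat.le_induction with
  | base =>
    have hquad := mul_pred_le_two_mul_binomLe m le_rfl
    have : m * 448 ≤ m * (m - 1) := Nat.mul_le_mul_left _ (by omega)
    omega
  | succ s _ ih =>
    calc 56 * m * 2 ^ (s + 1) = 2 * (56 * m * 2 ^ s) := by ring
      _ ≤ 2 * binomLe m s := Nat.mul_le_mul_left _ (ih (by omega))
      _ ≤ binomLe m (s + 1) := mul_binomLe_le h

/-- The Chernoff bound for binomial coefficients. -/
lemma binomLe_mul_pow_le {x : ℝ} (hx : 0 ≤ x) (hx1 : x ≤ 1) (m r : ℕ) :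
    binomLe m r * x ^ r ≤ (1 + x) ^ m := by
  have hpad : ∑ i ∈ range (m + 1), x ^ i * m.choose i =
      ∑ i ∈ range (m + r + 1), x ^ i * m.choose i :=
    sum_subset (range_mono (by omega)) fun i _ hi => by
      rw [Nat.choose_eq_zero_of_lt (by simpa using hi), Nat.cast_zero, mul_zero]
  calc binomLe m r * x ^ r = ∑ i ∈ range (r + 1), x ^ r * m.choose i := by
        rw [binomLe, Nat.cast_sum, mul_comm, mul_sum]
    _ ≤ ∑ i ∈ range (r + 1), x ^ i * m.choose i := by
        refine sum_le_sum fun i hi => mul_le_mul_of_nonneg_right ?_ (Nat.cast_nonneg _)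
        exact pow_le_pow_of_le_one hx hx1 (mem_range_succ_iff.mp hi)
    _ ≤ ∑ i ∈ range (m + r + 1), x ^ i * m.choose i :=
        sum_le_sum_of_subset_of_nonneg (range_mono (by omega)) fun i _ _ => by positivity
    _ = (1 + x) ^ m := by
        rw [← hpad, add_comm 1 x, add_pow]
        simp only [one_pow, mul_one]

lemma binomLe_le_exp (hr : 10000 * r ≤ m) : (binomLe m r : ℝ) ≤ Real.exp (m / 500) := by
  have hrm : (10000 * r : ℝ) ≤ m := by exact_mod_cast hr
  have hpow : (1024 : ℝ) ^ r = Real.exp (r * (10 * Real.log 2)) := by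
    rw [← Real.rpow_natCast, Real.rpow_def_of_pos (by norm_num),
      show (1024 : ℝ) = 2 ^ 10 by norm_num, Real.log_pow]
    ring_nf
  calc (binomLe m r : ℝ) = 1024 ^ r * (binomLe m r * (1 / 1024) ^ r) := by
        rw [mul_left_comm, ← mul_pow]
        norm_num
    _ ≤ 1024 ^ r * (1 + 1 / 1024) ^ m := by
        gcongr
        exact binomLe_mul_pow_le (by norm_num) (by norm_num) m r
    _ ≤ Real.exp (r * (10 * Real.log 2)) * Real.exp (m * (1 / 1024)) := by
        rw [hpow]
        gcongr
        exact one_add_pow_le_exp (by norm_num) m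
    _ ≤ Real.exp (m / 500) := by
        rw [← Real.exp_add]
        gcongr
        nlinarith [Real.log_two_lt_d9, r.cast_nonneg (α := ℝ)]

end Binomials

section BiasedWordsCount

variable {m r l K : ℕ}

lemma mul_binomLe_le_binomLe_sub {k : ℕ} (hr : 1 ≤ r) (h : 1001 * r + k ≤ m) :
    (1000 / 1001) ^ k * binomLe m r ≤ (binomLe (m - k) r : ℝ) := by
  obtain ⟨r, rfl⟩ := Nat.exists_eq_add_of_le' hr
  have hnat := pow_mul_binomLe_add_le (c := 1000) (m := m - k) (r := r) k (by omega)
  rw [Nat.sub_add_cancel (by omega)] at hnat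
  rw [div_pow, div_mul_eq_mul_div, div_le_iff₀ (by positivity), mul_comm (binomLe _ _ : ℝ)]
  exact_mod_cast hnat

lemma mul_add_self_le_binomLe_sub {k : ℕ} (hm : 2000 ≤ m) (hk : 25 * k ≤ m) (hr : 2 ≤ r) :
    (m * k + m : ℝ) ≤ 1 / 10 * binomLe (m - k) r := by
  obtain ⟨n, rfl⟩ : ∃ n, m = n + k + 1 := ⟨m - k - 1, by omega⟩
  have hquad := mul_pred_le_two_mul_binomLe (n + k + 1 - k) hr
  have hn : (n + 1) * n ≤ 2 * binomLe (n + k + 1 - k) r := by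
    convert hquad using 2 <;> omega
  have hn' : ((n + 1) * n : ℝ) ≤ 2 * binomLe (n + k + 1 - k) r := by exact_mod_cast hn
  have hk' : (24 * k : ℝ) ≤ n + 1 := by exact_mod_cast (by omega : 24 * k ≤ n + 1)
  have hn1900 : (1900 : ℝ) ≤ n := Nat.ofNat_le_cast.mpr (by omega)
  calc ((n + k + 1 : ℕ) * k + (n + k + 1 : ℕ) : ℝ)
      = (n + 1 + k) * (k + 1) := by push_cast; ring
    _ ≤ (n + 1 + (n + 1) / 24) * ((n + 1) / 24 + 1) := by gcongr <;> linarith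
    _ = (n + 1) * ((25 * n + 625) / 576) := by ring
    _ ≤ (n + 1) * (n / 20) := by
        gcongr ?_ * ?_
        linarith
    _ ≤ 1 / 10 * binomLe (n + k + 1 - k) r := by linarith

lemma one_add_pow_le_two_rpow {x : ℝ} (hx : 0 ≤ x) (K : ℕ) :
    (1 + x) ^ K ≤ 2 ^ (3 / 2 * x * K) := by
  refine (one_add_pow_le_exp (by linarith) K).trans ?_
  rw [Real.rpow_def_of_pos two_pos]
  refine Real.exp_le_exp.mpr ?_
  nlinarith [Real.log_two_gt_d9, mul_nonneg hx (K.cast_nonneg (α := ℝ))]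

lemma inv_two_pow_add_le_geometric (hl : 2 ≤ l) :
    (1 : ℝ) / 2 ^ (2 * l + 5) + 3 / 2 * (2 / 2 ^ l) ≤ 9 / 10 * (1000 / 1001) ^ (4 * l + 6) := by
  induction l, hl using Nat.le_induction with
  | base => norm_num
  | succ l _ ih =>
    calc (1 : ℝ) / 2 ^ (2 * (l + 1) + 5) + 3 / 2 * (2 / 2 ^ (l + 1))
        ≤ 1 / 2 * (1 / 2 ^ (2 * l + 5) + 3 / 2 * (2 / 2 ^ l)) := by
          rw [← sub_nonneg]
          ring_nf
          positivity
      _ ≤ (1000 / 1001) ^ 4 * (9 / 10 * (1000 / 1001) ^ (4 * l + 6)) := by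
          gcongr
          norm_num
      _ = 9 / 10 * (1000 / 1001) ^ (4 * (l + 1) + 6) := by ring

lemma card_lightWords_le_rpow_of_large {j : ℕ} (hm : 449 ≤ m) (hr : 10000 * r ≤ m) (hj : 2 ≤ j) :
    (#(lightWords (RM m r) j) : ℝ) ≤ 2 ^ (binomLe m r / 2 ^ (j + 1) : ℝ) :=
  card_lightWords_le_rpow r j hj (fun _ hs => mul_binomLe_le (by omega))
    fun _ hs _ => mul_two_pow_le_binomLe hm hs (by omega)

lemma biasedWords_exponent_le (hm : 2000 ≤ m) (hr : 2 ≤ r) (hrm : 10000 * r ≤ m)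
    (hl : 2 ≤ l) (hlm : l ≤ m / 125) (hK : K ≤ binomLe m r) :
    (m * (4 * l + 6) + m + binomLe m r / 2 ^ (2 * l + 5) + 3 / 2 * (2 / 2 ^ l) * K : ℝ) ≤
      binomLe (m - (4 * l + 6)) r := by
  have hlinear : (m * (4 * l + 6) + m : ℝ) ≤ 1 / 10 * binomLe (m - (4 * l + 6)) r := by
    exact_mod_cast mul_add_self_le_binomLe_sub hm (k := 4 * l + 6) (by omega) hr
  have hK' : (K : ℝ) ≤ binomLe m r := by exact_mod_cast hK
  calc (m * (4 * l + 6) + m + binomLe m r / 2 ^ (2 * l + 5) + 3 / 2 * (2 / 2 ^ l) * K : ℝ)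
      ≤ 1 / 10 * binomLe (m - (4 * l + 6)) r + binomLe m r / 2 ^ (2 * l + 5) +
          3 / 2 * (2 / 2 ^ l) * binomLe m r := by gcongr
    _ = 1 / 10 * binomLe (m - (4 * l + 6)) r +
          (1 / 2 ^ (2 * l + 5) + 3 / 2 * (2 / 2 ^ l)) * binomLe m r := by ring
    _ ≤ 1 / 10 * binomLe (m - (4 * l + 6)) r +
          9 / 10 * (1000 / 1001) ^ (4 * l + 6) * binomLe m r := by
        gcongr
        exact inv_two_pow_add_le_geometric hl
    _ ≤ binomLe (m - (4 * l + 6)) r := by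
        linarith [mul_binomLe_le_binomLe_sub (m := m) (r := r) (k := 4 * l + 6) (by omega)
          (by omega)]

lemma card_biasedWords_mul_pow_le (hm : 2000 ≤ m) (hr : 2 ≤ r) (hrm : 10000 * r ≤ m)
    (hl : 2 ≤ l) (hlm : l ≤ m / 125) (hK : K ≤ binomLe m r) :
    #(biasedWords (RM m r) l) * (1 + 2 / 2 ^ l : ℝ) ^ K ≤ 2 ^ binomLe m r / 2 ^ m := by
  set D' := binomLe (m - (4 * l + 6)) r
  have hcount : (2 : ℝ) ^ D' * #(biasedWords (RM m r) l) ≤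
      2 ^ (m * (4 * l + 6)) * (2 ^ binomLe m r * #(lightWords (RM m r) (2 * l + 4))) := by
    exact_mod_cast card_biasedWords_mul_le m r l
  rw [le_div_iff₀ (by positivity)]
  refine le_of_mul_le_mul_left ?_ (by positivity : (0 : ℝ) < 2 ^ D')
  calc (2 : ℝ) ^ D' * (#(biasedWords (RM m r) l) * (1 + 2 / 2 ^ l) ^ K * 2 ^ m)
      = 2 ^ D' * #(biasedWords (RM m r) l) * ((1 + 2 / 2 ^ l) ^ K * 2 ^ m) := by ring
    _ ≤ 2 ^ (m * (4 * l + 6)) * (2 ^ binomLe m r * #(lightWords (RM m r) (2 * l + 4))) *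
          ((1 + 2 / 2 ^ l) ^ K * 2 ^ m) := by gcongr
    _ ≤ 2 ^ (m * (4 * l + 6)) * (2 ^ binomLe m r * 2 ^ (binomLe m r / 2 ^ (2 * l + 5) : ℝ)) *
          (2 ^ (3 / 2 * (2 / 2 ^ l) * K : ℝ) * 2 ^ m) := by
        gcongr
        · exact card_lightWords_le_rpow_of_large (by omega) hrm (by omega)
        · exact one_add_pow_le_two_rpow (by positivity) K
    _ = 2 ^ binomLe m r * 2 ^ (m * (4 * l + 6) + m + binomLe m r / 2 ^ (2 * l + 5) +
          3 / 2 * (2 / 2 ^ l) * K : ℝ) := by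
        have hcast : (m * (4 * l + 6) + m : ℝ) = (m * (4 * l + 6) + m : ℕ) := by push_cast; ring
        rw [Real.rpow_add two_pos, Real.rpow_add two_pos, hcast, Real.rpow_natCast, pow_add]
        ring
    _ ≤ 2 ^ binomLe m r * 2 ^ (D' : ℝ) := by
        gcongr
        · exact one_le_two
        · exact biasedWords_exponent_le hm hr hrm hl hlm hK
    _ = 2 ^ D' * 2 ^ binomLe m r := by rw [Real.rpow_natCast, mul_comm]

end BiasedWordsCount

section Scales

variable {X : Type*} [Fintype X] [Nonempty X] {C : Submodule (ZMod 2) (X → ZMod 2)}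
  {P : X → ZMod 2}

lemma one_add_bias_nonneg (P : X → ZMod 2) : 0 ≤ 1 + bias P := by
  rw [one_add_bias]
  positivity

lemma exists_mem_lightWords (hP : P ∈ C) (h0 : P ≠ 0) (hbias : 1 / 2 ≤ bias P) :
    ∃ j, 2 ≤ j ∧ P ∈ lightWords C j ∧ 1 + bias P ≤ 2 * (1 - 1 / 2 ^ (j + 1)) := by
  have hcard : (0 : ℝ) < Fintype.card X := by exact_mod_cast Fintype.card_pos
  have hnorm : (0 : ℝ) < hammingNorm P := by exact_mod_cast hammingNorm_pos_iff.mpr h0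
  have hbias_eq : bias P = 1 - 2 * (hammingNorm P / Fintype.card X) := by
    rw [bias_eq_one_sub, mul_div_assoc]
  obtain ⟨j, hlt, hle⟩ := exists_nat_pow_near_of_lt_one (div_pos hnorm hcard)
    (by linarith : (hammingNorm P / Fintype.card X : ℝ) ≤ 1) one_half_pos one_half_lt_one
  refine ⟨j, ?_, mem_lightWords.mpr ⟨hP, ?_⟩, ?_⟩
  · by_contra! hj
    have : (1 / 2 : ℝ) ^ 2 ≤ (1 / 2) ^ (j + 1) :=
      pow_le_pow_of_le_one one_half_pos.le one_half_lt_one.le (by omega)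
    linarith
  · rw [one_div, inv_pow, div_le_iff₀ hcard, inv_mul_eq_div, le_div_iff₀' (by positivity)] at hle
    exact_mod_cast hle
  · rw [← one_div_pow]
    linarith

omit [Nonempty X] in
lemma exists_mem_biasedWords {s : ℕ} (hP : P ∈ C) (hs : 1 < 2 ^ s * bias P)
    (hbias : bias P < 1 / 2) :
    ∃ l ∈ Icc 2 s, P ∈ biasedWords C l ∧ bias P ≤ 2 / 2 ^ l := by
  obtain ⟨n, hlt, hle⟩ := exists_nat_pow_near_of_lt_one
    (pos_of_mul_pos_right (one_pos.trans hs) (by positivity)) (by linarith) one_half_pos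
    one_half_lt_one
  have hns : n < s := by
    rw [← div_lt_iff₀' (by positivity), ← one_div_pow] at hs
    exact (pow_lt_pow_iff_right_of_lt_one₀ one_half_pos one_half_lt_one).mp (hs.trans_le hle)
  refine ⟨n + 1, mem_Icc.mpr ⟨?_, hns⟩, mem_filter.mpr ⟨mem_codewords.mpr hP, ?_⟩,
    hle.trans_eq ?_⟩
  · by_contra! hn
    obtain rfl : n = 0 := by omega
    linarith
  · rw [one_div_pow, div_lt_iff₀' (by positivity)] at hlt
    exact hlt.le
  · rw [one_div_pow, pow_succ]
    field_simp

end Scales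

section Moments

lemma one_lt_mul_of_lt_mul {a b c x : ℝ} (ha : 0 ≤ a) (hb : 0 < b) (hab : a ≤ c * b)
    (hx : c < a * x) : 1 < b * x := by
  have hc : 0 ≤ c := nonneg_of_mul_nonneg_left (ha.trans hab) hb
  have hx0 : 0 < x := pos_of_mul_pos_right (hc.trans_lt hx) ha
  refine lt_of_mul_lt_mul_left ?_ hc
  calc c * 1 < a * x := by rwa [mul_one]
    _ ≤ c * b * x := by gcongr
    _ = c * (b * x) := mul_assoc ..

variable {m r K s : ℕ} {τ ε : ℝ} {P : Point m → ZMod 2}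

lemma two_mul_one_sub_one_div_two_pow_nonneg (j : ℕ) : (0 : ℝ) ≤ 2 * (1 - 1 / 2 ^ j) := by
  have : (1 : ℝ) / 2 ^ j ≤ 1 := div_le_one_of_le₀ (one_le_pow₀ one_le_two) (by positivity)
  linarith

/-- The words of tiny bias contribute `e ^ τ` each; the others are sorted by the scale of their
weight, or of their bias. -/
lemma one_add_bias_pow_le (hP : P ∈ RM m r) (hK : K ≤ τ * 2 ^ s) :
    (1 + bias P) ^ K ≤ Real.exp τ + (if P = 0 then 2 ^ K else 0) +
      (∑ j ∈ Icc 2 r,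
        if P ∈ lightWords (RM m r) j then (2 * (1 - 1 / 2 ^ (j + 1)) : ℝ) ^ K else 0) +
      ∑ l ∈ Icc 2 s,
        if P ∈ (biasedWords (RM m r) l).erase 0 then (1 + 2 / 2 ^ l : ℝ) ^ K else 0 := by
  have hlight0 (j : ℕ) (_ : j ∈ Icc 2 r) : (0 : ℝ) ≤
      if P ∈ lightWords (RM m r) j then (2 * (1 - 1 / 2 ^ (j + 1)) : ℝ) ^ K else 0 :=
    ite_nonneg (pow_nonneg (two_mul_one_sub_one_div_two_pow_nonneg (j + 1)) K) le_rfl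
  have hbiased0 (l : ℕ) (_ : l ∈ Icc 2 s) : (0 : ℝ) ≤
      if P ∈ (biasedWords (RM m r) l).erase 0 then (1 + 2 / 2 ^ l : ℝ) ^ K else 0 := by positivity
  have hlight_sum := sum_nonneg hlight0
  have hbiased_sum := sum_nonneg hbiased0
  have hexp := Real.exp_pos τ
  by_cases h0 : P = 0
  · rw [if_pos h0, h0, bias_zero, one_add_one_eq_two]
    subst h0
    linarith
  rw [if_neg h0]
  by_cases hsmall : K * bias P ≤ τ
  · have := (one_add_pow_le_exp (by linarith [one_add_bias_nonneg P]) K).trans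
      (Real.exp_le_exp.mpr hsmall)
    linarith
  by_cases hhalf : 1 / 2 ≤ bias P
  · obtain ⟨j, hj, hPj, hle⟩ := exists_mem_lightWords hP h0 hhalf
    have hjr : j ≤ r := by
      by_contra! hrj
      exact h0 (mem_singleton.mp (lightWords_RM_subset hrj hPj))
    have hterm := single_le_sum hlight0 (mem_Icc.mpr ⟨hj, hjr⟩)
    rw [if_pos hPj] at hterm
    have := pow_le_pow_left₀ (one_add_bias_nonneg P) hle K
    linarith
  · have hs : 1 < 2 ^ s * bias P :=
      one_lt_mul_of_lt_mul (Nat.cast_nonneg K) (by positivity) hK (not_le.mp hsmall)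
    obtain ⟨l, hl, hPl, hle⟩ := exists_mem_biasedWords hP hs (not_le.mp hhalf)
    have hterm := single_le_sum hbiased0 hl
    rw [if_pos (mem_erase.mpr ⟨h0, hPl⟩)] at hterm
    have := pow_le_pow_left₀ (one_add_bias_nonneg P) (add_le_add_right hle 1) K
    linarith

lemma sum_one_add_bias_pow_le (r : ℕ) (hK : K ≤ τ * 2 ^ s) :
    ∑ P ∈ codewords (RM m r), (1 + bias P) ^ K ≤ Real.exp τ * 2 ^ binomLe m r + 2 ^ K +
      (∑ j ∈ Icc 2 r, #(lightWords (RM m r) j) * (2 * (1 - 1 / 2 ^ (j + 1)) : ℝ) ^ K) +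
      ∑ l ∈ Icc 2 s, #((biasedWords (RM m r) l).erase 0) * (1 + 2 / 2 ^ l : ℝ) ^ K := by
  have hite (A : Finset (Point m → ZMod 2)) (hA : A ⊆ codewords (RM m r)) (x : ℝ) :
      ∑ P ∈ codewords (RM m r), (if P ∈ A then x else 0) = #A * x := by
    rw [← sum_filter, filter_mem_eq_inter, inter_eq_right.mpr hA, sum_const, nsmul_eq_mul]
  refine (sum_le_sum fun P hP => one_add_bias_pow_le (mem_codewords.mp hP) hK).trans_eq ?_
  simp_rw [sum_add_distrib]
  rw [sum_comm (t := Icc 2 r), sum_comm (t := Icc 2 s), sum_const, nsmul_eq_mul, card_codewords_RM,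
    sum_ite_eq', if_pos (mem_codewords.mpr (zero_mem _)),
    sum_congr rfl fun j _ => hite (lightWords (RM m r) j) (filter_subset _ _) _,
    sum_congr rfl fun l _ => hite ((biasedWords (RM m r) l).erase 0)
      ((erase_subset _ _).trans (filter_subset _ _)) _]
  push_cast
  ring

lemma two_pow_eq_exp (n : ℕ) : (2 : ℝ) ^ n = Real.exp (n * Real.log 2) := by
  rw [Real.exp_nat_mul, Real.exp_log two_pos]

lemma two_pow_le_mul_exp (hε : 0 < ε) (hK : K ≤ (1 - ε) * binomLe m r) :
    (2 : ℝ) ^ K ≤ 2 ^ binomLe m r * Real.exp (-(ε * binomLe m r / 2)) := by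
  have hlog := Real.log_two_gt_d9
  have hεD : 0 ≤ ε * binomLe m r := by positivity
  rw [two_pow_eq_exp, two_pow_eq_exp, ← Real.exp_add, Real.exp_le_exp]
  nlinarith

lemma lightWords_exponent_le {D y k : ℝ} (hε : 0 ≤ ε) (hD : 0 ≤ D) (hy0 : 0 ≤ y) (hy : y ≤ 1 / 8)
    (hk : k ≤ (1 - ε) * D) :
    Real.log 2 * (y * D) + k * (Real.log 2 - y) ≤ D * Real.log 2 + -(ε * D / 2) := by
  have hlog := Real.log_two_gt_d9
  have hlog' := Real.log_two_lt_d9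
  calc Real.log 2 * (y * D) + k * (Real.log 2 - y)
      ≤ Real.log 2 * (y * D) + (1 - ε) * D * (Real.log 2 - y) := by
        gcongr
        linarith
    _ = D * Real.log 2 - y * D * (1 - Real.log 2) - ε * D * (Real.log 2 - y) := by ring
    _ ≤ D * Real.log 2 - 0 - ε * D * (1 / 2) := by
        gcongr
        · exact mul_nonneg (mul_nonneg hy0 hD) (by linarith)
        · linarith
    _ = D * Real.log 2 + -(ε * D / 2) := by ring

/-- The number of words of weight scale `j` is at most `2 ^ (D / 2 ^ (j + 1))`, whereas the factor
`(1 - 1 / 2 ^ (j + 1)) ^ K` gains `e ^ (-K / 2 ^ (j + 1))`, and `log 2 < 1`. -/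
lemma card_lightWords_mul_pow_le {j : ℕ} (hε : 0 < ε) (hm : 449 ≤ m) (hrm : 10000 * r ≤ m)
    (hj : 2 ≤ j) (hK : K ≤ (1 - ε) * binomLe m r) :
    #(lightWords (RM m r) j) * (2 * (1 - 1 / 2 ^ (j + 1)) : ℝ) ^ K ≤
      2 ^ binomLe m r * Real.exp (-(ε * binomLe m r / 2)) := by
  set D : ℝ := (binomLe m r : ℝ) with hD
  set y : ℝ := 1 / 2 ^ (j + 1)
  have hy : y ≤ 1 / 8 := by
    have : (2 : ℝ) ^ 3 ≤ 2 ^ (j + 1) := pow_le_pow_right₀ one_le_two (by omega)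
    exact one_div_le_one_div_of_le (by norm_num) (by linarith)
  have hcount : (#(lightWords (RM m r) j) : ℝ) ≤ Real.exp (Real.log 2 * (y * D)) := by
    rw [← Real.rpow_def_of_pos two_pos, one_div_mul_eq_div]
    exact card_lightWords_le_rpow_of_large hm hrm hj
  have hpow : (2 * (1 - y)) ^ K ≤ Real.exp (K * (Real.log 2 - y)) := by
    rw [Real.exp_nat_mul, sub_eq_add_neg (Real.log 2), Real.exp_add, Real.exp_log two_pos]
    gcongr
    · linarith
    · linarith [Real.add_one_le_exp (-y)]
  have hexponent : Real.log 2 * (y * D) + K * (Real.log 2 - y) ≤ D * Real.log 2 + -(ε * D / 2) :=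
    lightWords_exponent_le hε.le (Nat.cast_nonneg _) (by positivity) hy hK
  calc _ ≤ Real.exp (Real.log 2 * (y * D)) * Real.exp (K * (Real.log 2 - y)) := by
        refine mul_le_mul hcount hpow (pow_nonneg ?_ K) (Real.exp_nonneg _)
        linarith
    _ ≤ Real.exp (D * Real.log 2 + -(ε * D / 2)) := by
        rwa [← Real.exp_add, Real.exp_le_exp]
    _ = 2 ^ binomLe m r * Real.exp (-(ε * D / 2)) := by
        rw [Real.exp_add, hD, ← two_pow_eq_exp]

lemma erase_biasedWords_eq_empty (hr : r ≤ 1) (l : ℕ) :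
    (biasedWords (RM m r) l).erase 0 = ∅ := by
  refine eq_empty_of_forall_notMem fun P hP => ?_
  obtain ⟨h0, hP⟩ := mem_erase.mp hP
  obtain ⟨hPC, hPl⟩ := mem_filter.mp hP
  have hdist : (2 ^ m : ℝ) ≤ 2 * hammingNorm P := by
    exact_mod_cast two_pow_le_mul_hammingNorm (RM_mono hr (mem_codewords.mp hPC)) h0
  have hbias : bias P ≤ 0 := by
    rw [bias_eq_one_sub, sub_nonpos, one_le_div (by simp)]
    simpa using hdist
  exact absurd hPl (by nlinarith [pow_pos (two_pos (α := ℝ)) l])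

lemma card_erase_biasedWords_mul_pow_le {l : ℕ} (hm : 2000 ≤ m) (hrm : 10000 * r ≤ m) (hl : 2 ≤ l)
    (hlm : l ≤ m / 125) (hK : K ≤ binomLe m r) :
    #((biasedWords (RM m r) l).erase 0) * (1 + 2 / 2 ^ l : ℝ) ^ K ≤ 2 ^ binomLe m r / 2 ^ m := by
  obtain hr | hr := le_or_gt r 1
  · rw [erase_biasedWords_eq_empty hr, card_empty, Nat.cast_zero, zero_mul]
    positivity
  · refine le_trans ?_ (card_biasedWords_mul_pow_le hm hr hrm hl hlm hK)
    gcongr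
    exact erase_subset _ _

lemma sum_one_add_bias_pow_le_of_large (hε : 0 < ε) (hε1 : ε ≤ 1) (hm : 2000 ≤ m) (hr : 1 ≤ r)
    (hrm : 10000 * r ≤ m) (hK : K ≤ (1 - ε) * binomLe m r) (hKτ : K ≤ τ * 2 ^ (m / 125)) :
    ∑ P ∈ codewords (RM m r), (1 + bias P) ^ K ≤
      (Real.exp τ + m * Real.exp (-(ε * m / 2))) * 2 ^ binomLe m r := by
  set E := Real.exp (-(ε * m / 2))
  have hmD : (m : ℝ) ≤ binomLe m r := by
    exact_mod_cast (Nat.choose_one_right m).symm.trans_le (choose_le_binomLe m hr)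
  have hKD : K ≤ binomLe m r := by
    have : (0 : ℝ) ≤ ε * binomLe m r := by positivity
    exact_mod_cast (by linarith : (K : ℝ) ≤ binomLe m r)
  have hDE : 2 ^ binomLe m r * Real.exp (-(ε * binomLe m r / 2)) ≤ 2 ^ binomLe m r * E :=
    mul_le_mul_of_nonneg_left (Real.exp_le_exp.mpr (by gcongr)) (by positivity)
  have hmE : (2 : ℝ) ^ binomLe m r / 2 ^ m ≤ 2 ^ binomLe m r * E := by
    rw [div_eq_mul_inv, two_pow_eq_exp m, ← Real.exp_neg]
    refine mul_le_mul_of_nonneg_left (Real.exp_le_exp.mpr ?_) (by positivity)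
    nlinarith [Real.log_two_gt_d9, (Nat.cast_nonneg m : (0 : ℝ) ≤ m)]
  have hlight : ∀ j ∈ Icc 2 r, #(lightWords (RM m r) j) * (2 * (1 - 1 / 2 ^ (j + 1)) : ℝ) ^ K ≤
      2 ^ binomLe m r * E := fun j hj =>
    (card_lightWords_mul_pow_le hε (by omega) hrm (mem_Icc.mp hj).1 hK).trans hDE
  have hbiased : ∀ l ∈ Icc 2 (m / 125),
      #((biasedWords (RM m r) l).erase 0) * (1 + 2 / 2 ^ l : ℝ) ^ K ≤ 2 ^ binomLe m r * E :=
    fun l hl =>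
      (card_erase_biasedWords_mul_pow_le hm hrm (mem_Icc.mp hl).1 (mem_Icc.mp hl).2 hKD).trans hmE
  have hscales : (1 + #(Icc 2 r) + #(Icc 2 (m / 125)) : ℝ) ≤ m := by
    simp only [Nat.card_Icc]
    exact_mod_cast (by omega : 1 + (r + 1 - 2) + (m / 125 + 1 - 2) ≤ m)
  calc _ ≤ Real.exp τ * 2 ^ binomLe m r + 2 ^ binomLe m r * E +
          #(Icc 2 r) • (2 ^ binomLe m r * E) + #(Icc 2 (m / 125)) • (2 ^ binomLe m r * E) :=
        (sum_one_add_bias_pow_le r hKτ).trans (by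
          gcongr
          · exact (two_pow_le_mul_exp hε hK).trans hDE
          · exact sum_le_card_nsmul _ _ _ hlight
          · exact sum_le_card_nsmul _ _ _ hbiased)
    _ = (Real.exp τ + (1 + #(Icc 2 r) + #(Icc 2 (m / 125))) * E) * 2 ^ binomLe m r := by
        simp only [nsmul_eq_mul]
        ring
    _ ≤ (Real.exp τ + m * E) * 2 ^ binomLe m r := by gcongr

lemma eventually_mul_exp_neg_le {δ : ℝ} (hε : 0 < ε) (hδ : 0 < δ) :
    ∀ᶠ m : ℕ in atTop, m * Real.exp (-(ε * m / 2)) ≤ δ := by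
  have hlim := (Real.tendsto_pow_mul_exp_neg_atTop_nhds_zero 1).comp
    (tendsto_natCast_atTop_atTop.const_mul_atTop (half_pos hε))
  filter_upwards [hlim.eventually_le_const (by positivity : 0 < ε / 2 * δ)] with m hm
  refine le_of_mul_le_mul_left (le_of_eq_of_le ?_ hm) (half_pos hε)
  simp only [Function.comp_apply, pow_one]
  ring_nf

lemma eventually_exp_le_mul_two_pow (hτ : 0 < τ) :
    ∀ᶠ m : ℕ in atTop, Real.exp (m / 500) ≤ τ * 2 ^ (m / 125) := by
  have hlim := Real.tendsto_exp_atTop.comp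
    (tendsto_natCast_atTop_atTop.const_mul_atTop (by norm_num : (0 : ℝ) < 3 / 1000))
  filter_upwards [hlim.eventually_ge_atTop (2 / τ)] with m hm
  have hm' : 2 ≤ τ * Real.exp (3 / 1000 * m) := by rwa [← div_le_iff₀' hτ]
  have hfloor : (m / 125 : ℝ) ≤ (m / 125 : ℕ) + 1 := by
    rw [div_le_iff₀ (by norm_num)]
    exact_mod_cast (by omega : m ≤ (m / 125 + 1) * 125)
  have hexp : Real.exp (m / 200) ≤ 2 * 2 ^ (m / 125) := by
    rw [← pow_succ', two_pow_eq_exp, Real.exp_le_exp]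
    push_cast
    nlinarith [Real.log_two_gt_d9]
  have hsplit : Real.exp (m / 200 : ℝ) = Real.exp (m / 500) * Real.exp (3 / 1000 * m) := by
    rw [← Real.exp_add]
    ring_nf
  nlinarith [Real.exp_pos (m / 500 : ℝ)]

theorem eventually_sum_one_add_bias_pow_le {ρ : ℝ} (hε : 0 < ε) (hε1 : ε ≤ 1) (hρ : 0 < ρ) :
    ∀ᶠ m : ℕ in atTop, ∀ r K : ℕ, 10000 * r ≤ m → K ≤ (1 - ε) * binomLe m r →
      ∑ P ∈ codewords (RM m r), (1 + bias P) ^ K ≤ (1 + ρ) * #(codewords (RM m r)) := by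
  have hτ : 0 < Real.log (1 + ρ / 2) := Real.log_pos (by linarith)
  filter_upwards [eventually_ge_atTop 2000, eventually_exp_le_mul_two_pow hτ,
    eventually_mul_exp_neg_le hε (half_pos hρ)] with m hm hexp hE r K hrm hK
  obtain rfl | hK0 := Nat.eq_zero_or_pos K
  · simp only [pow_zero, sum_const, nsmul_eq_mul, mul_one]
    exact le_mul_of_one_le_left (Nat.cast_nonneg _) (by linarith)
  have hr : 1 ≤ r := by
    by_contra! hr
    obtain rfl : r = 0 := by omega
    have : (1 : ℝ) ≤ K := by exact_mod_cast hK0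
    simp only [binomLe, zero_add, sum_range_one, Nat.choose_zero_right, Nat.cast_one] at hK
    linarith
  have hKτ : K ≤ Real.log (1 + ρ / 2) * 2 ^ (m / 125) := by
    have : 0 ≤ ε * binomLe m r := by positivity
    linarith [binomLe_le_exp hrm]
  calc _ ≤ (1 + ρ / 2 + m * Real.exp (-(ε * m / 2))) * 2 ^ binomLe m r := by
        simpa only [Real.exp_log (by linarith : 0 < 1 + ρ / 2)] using
          sum_one_add_bias_pow_le_of_large hε hε1 hm hr hrm hK hKτ
    _ ≤ (1 + ρ / 2 + ρ / 2) * 2 ^ binomLe m r := by gcongr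
    _ = (1 + ρ) * #(codewords (RM m r)) := by
        rw [add_assoc, add_halves, card_codewords_RM]
        push_cast
        rfl

end Moments

lemma recovers_RM_iff {m d : ℕ} {Z : Finset (Point m)} :
    Recovers (RM m d) Z ↔ ∀ c : RMcode m d,
      {x : Point m | evalLin m d x c ≠ 0} ⊆ (Z : Set (Point m)) → c = 0 := by
  have hsupp (c : RMcode m d) : {x : Point m | evalLin m d x c ≠ 0} =
      support (Fintype.linearCombination (ZMod 2) (fun S : MonIdx m d => monomial S.1) c) :=
    Set.ext fun x => by simp [evalLin_eq_linearCombination]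
  have hzero (c : RMcode m d) :
      Fintype.linearCombination (ZMod 2) (fun S : MonIdx m d => monomial S.1) c = 0 ↔ c = 0 :=
    map_eq_zero_iff _ (linearIndependent_monIdx m d).fintypeLinearCombination_injective
  simp_rw [Recovers, RM_eq_span_range, ← Fintype.range_linearCombination, LinearMap.mem_range,
    forall_exists_index, forall_apply_eq_imp_iff, hsupp, hzero]

end ReedMuller

/-- high-degree RM codes under erasures.
There is an absolute constant `γ₀ > 0` such that for every `ε ∈ (0,1)` and `ρ > 0`
there is `m₀` such that for all `m ≥ m₀` and integers `d` with `(1-γ₀)m < d < m`,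
setting `r = m - d - 1` and `K = ⌊(1-ε)·binom(m,≤r)⌋`, a uniformly random
`K`-element subset `Z ⊆ F₂^m` satisfies, with probability at least `1 - ρ`:
no nonzero multilinear polynomial of degree at most `d` has its support contained
in `Z` (i.e. `RM(m,d)` recovers from the erasure pattern `Z`). -/
theorem high_degree_RM_under_BEC :
    ∃ γ₀ : ℝ, 0 < γ₀ ∧
      ∀ ε : ℝ, 0 < ε → ε < 1 →
        ∀ ρ : ℝ, 0 < ρ →
          ∃ m₀ : ℕ, ∀ m : ℕ, m₀ ≤ m →
            ∀ d : ℕ, (1 - γ₀) * (m : ℝ) < (d : ℝ) → d < m →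
              ∀ K : ℕ, K = ⌊(1 - ε) * (binomLe m (m - d - 1) : ℝ)⌋₊ →
                (1 - ρ) *
                    (Nat.card {Z : Finset (Fin m → ZMod 2) // Z.card = K} : ℝ)
                  ≤ (Nat.card {Z : Finset (Fin m → ZMod 2) //
                      Z.card = K ∧
                      ∀ c : RMcode m d,
                        {x : Fin m → ZMod 2 | evalLin m d x c ≠ 0} ⊆
                          (Z : Set (Fin m → ZMod 2)) → c = 0} : ℝ) := by
  refine ⟨1 / 10000, by norm_num, fun ε hε hε1 ρ hρ => ?_⟩
  obtain ⟨m₀, hm₀⟩ := Filter.eventually_atTop.mp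
    (ReedMuller.eventually_sum_one_add_bias_pow_le hε hε1.le hρ)
  refine ⟨m₀, fun m hm d hd hdm K hK => ?_⟩
  have hr : 10000 * (m - d - 1) ≤ m := by
    have : (9999 * m : ℝ) < 10000 * d := by linarith
    have : 9999 * m < 10000 * d := by exact_mod_cast this
    omega
  have hKD : (K : ℝ) ≤ (1 - ε) * binomLe m (m - d - 1) := by
    rw [hK]
    exact Nat.floor_le (mul_nonneg (sub_nonneg.mpr hε1.le) (Nat.cast_nonneg _))
  simpa only [ReedMuller.recovers_RM_iff] using
    ReedMuller.one_sub_mul_card_le_card_recovers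
      (fun P hP f hf => ReedMuller.dotProduct_eq_zero_of_mem_RM (by omega) hP hf)
      (hm₀ m hm (m - d - 1) K hr hKD)
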